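/- Let N ≥ 3, let Ω ⊂ ℝ^N be an open set, let θ ≥ p > 1 and λ, γ > 0, and let s₀ be the unique root of L in (2, ∞). Then for every s with 2 ≤ s < (N/(N−2)) s₀ there exist a natural number ℓ and a constant C > 0 (depending only on N, p, θ, s, λ, γ) such that for every pair (u, v) of functions in C²(Ω), positive in Ω, satisfying −Δu = λ(v+1)^p and −Δv = γ(u+1)^θ in Ω and stable, and every y ∈ Ω and R > 0 with the closed ball B_R(y) contained in Ω, one has (R^{−N} ∫_{B_{2^{−ℓ}R}(y)} (v+1)^s dx)^{2/s} ≤ C R^{−N} ∫_{B_R(y)} (v+1)² dx. -/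

import Mathlib

open MeasureTheory Metric Real Set

noncomputable section

/-- The Euclidean Laplacian `Δw(x) = ∑ i, ∂²w/∂xᵢ²(x)` on `ℝ^N`. -/
def lap {N : ℕ} (w : EuclideanSpace ℝ (Fin N) → ℝ) (x : EuclideanSpace ℝ (Fin N)) : ℝ :=
  ∑ i : Fin N,
    fderiv ℝ (fun y => fderiv ℝ w y (EuclideanSpace.single i 1)) x (EuclideanSpace.single i 1)

/-- `φ` is a smooth compactly supported test function with support inside `Ω`. -/
def IsTestFun {N : ℕ} (Ω : Set (EuclideanSpace ℝ (Fin N)))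
    (φ : EuclideanSpace ℝ (Fin N) → ℝ) : Prop :=
  ContDiff ℝ (⊤ : ℕ∞) φ ∧ HasCompactSupport φ ∧ tsupport φ ⊆ Ω

/-- Stability of a classical solution of `-Δu = λ(v+1)^p, -Δv = γ(u+1)^θ` in `Ω`:
`√(λγpθ) ∫_Ω (v+1)^((p-1)/2) (u+1)^((θ-1)/2) φ² ≤ ∫_Ω |∇φ|²` for all test functions. -/
def IsStable {N : ℕ} (Ω : Set (EuclideanSpace ℝ (Fin N))) (lam gam p θ : ℝ)
    (u v : EuclideanSpace ℝ (Fin N) → ℝ) : Prop :=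
  ∀ φ : EuclideanSpace ℝ (Fin N) → ℝ, IsTestFun Ω φ →
    Real.sqrt (lam * gam * p * θ) *
        ∫ x in Ω, (v x + 1) ^ ((p - 1) / 2) * (u x + 1) ^ ((θ - 1) / 2) * φ x ^ 2
      ≤ ∫ x in Ω, ‖gradient φ x‖ ^ 2

/-- `(u,v)` is a positive classical solution of `-Δu = λ(v+1)^p, -Δv = γ(u+1)^θ` in `Ω`. -/
def IsSolution {N : ℕ} (Ω : Set (EuclideanSpace ℝ (Fin N))) (lam gam p θ : ℝ)
    (u v : EuclideanSpace ℝ (Fin N) → ℝ) : Prop :=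
  ContDiffOn ℝ 2 u Ω ∧ ContDiffOn ℝ 2 v Ω ∧
  (∀ x ∈ Ω, 0 < u x) ∧ (∀ x ∈ Ω, 0 < v x) ∧
  (∀ x ∈ Ω, -lap u x = lam * (v x + 1) ^ p) ∧
  (∀ x ∈ Ω, -lap v x = gam * (u x + 1) ^ θ)

/-- The quartic polynomial `L`. -/
def Lpoly (p θ s : ℝ) : ℝ :=
  s ^ 4 - (16 * p * θ * (p + 1) / (θ + 1)) * s ^ 2
    + (16 * p * θ * (p + 1) * (p + θ + 2) / (θ + 1) ^ 2) * s
    - 16 * p * θ * (p + 1) ^ 2 / (θ + 1) ^ 2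

abbrev EE (N : ℕ) := EuclideanSpace ℝ (Fin N)

lemma continuous_mul_cutoff {N : ℕ} {Ω : Set (EE N)} (hΩ : IsOpen Ω) {f η : EE N → ℝ}
    (hf : ContinuousOn f Ω) (hη : Continuous η) (hs : tsupport η ⊆ Ω) :
    Continuous (fun x => f x * η x) := by
  rw [continuous_iff_continuousAt]
  intro x
  by_cases hx : x ∈ tsupport η
  · exact (hf.continuousAt (hΩ.mem_nhds (hs hx))).mul hη.continuousAt
  · have h0 : (fun x => f x * η x) =ᶠ[nhds x] fun _ => 0 := by
      have := notMem_tsupport_iff_eventuallyEq.1 hx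
      filter_upwards [this] with z hz
      simp [hz]
    exact (continuousAt_const).congr h0.symm

lemma contDiff_mul_cutoff {N : ℕ} {Ω : Set (EE N)} (hΩ : IsOpen Ω) {n : WithTop ℕ∞}
    {f η : EE N → ℝ} (hf : ContDiffOn ℝ n f Ω) (hη : ContDiff ℝ n η) (hs : tsupport η ⊆ Ω) :
    ContDiff ℝ n (fun x => f x * η x) := by
  rw [contDiff_iff_contDiffAt]
  intro x
  by_cases hx : x ∈ tsupport η
  · exact (hf.contDiffAt (hΩ.mem_nhds (hs hx))).mul hη.contDiffAt
  · have h0 : (fun x => f x * η x) =ᶠ[nhds x] fun _ => 0 := by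
      have := notMem_tsupport_iff_eventuallyEq.1 hx
      filter_upwards [this] with z hz
      simp [hz]
    exact (contDiffAt_const).congr_of_eventuallyEq h0

lemma tsupport_mul_cutoff {N : ℕ} {f η : EE N → ℝ} :
    tsupport (fun x => f x * η x) ⊆ tsupport η :=
  tsupport_mul_subset_right

lemma tsupport_fderiv_apply_subset' {N : ℕ} (ξ : EE N → ℝ) (v : EE N) :
    tsupport (fun x => fderiv ℝ ξ x v) ⊆ tsupport ξ := by
  exact tsupport_fderiv_apply_subset ℝ v

lemma integrable_mul_cutoff {N : ℕ} {Ω : Set (EE N)} (hΩ : IsOpen Ω) {f η : EE N → ℝ}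
    (hf : ContinuousOn f Ω) (hη : Continuous η) (hc : HasCompactSupport η) (hs : tsupport η ⊆ Ω) :
    Integrable (fun x => f x * η x) :=
  (continuous_mul_cutoff hΩ hf hη hs).integrable_of_hasCompactSupport hc.mul_left

lemma ibp {N : ℕ} {Ω : Set (EE N)} (hΩ : IsOpen Ω) {f ξ : EE N → ℝ}
    (hf : ContDiffOn ℝ 1 f Ω) (hξ : ContDiff ℝ 1 ξ) (hc : HasCompactSupport ξ)
    (hs : tsupport ξ ⊆ Ω) (v : EE N) :
    ∫ x, f x * fderiv ℝ ξ x v = - ∫ x, fderiv ℝ f x v * ξ x := by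
  have hdξ : Continuous (fun x => fderiv ℝ ξ x v) :=
    (hξ.continuous_fderiv (by norm_num)).clm_apply continuous_const
  have hdf : ContinuousOn (fun x => fderiv ℝ f x v) Ω :=
    (hf.continuousOn_fderiv_of_isOpen hΩ le_rfl).clm_apply continuousOn_const
  apply integral_mul_fderiv_eq_neg_fderiv_mul_of_integrable
  · exact integrable_mul_cutoff hΩ hdf hξ.continuous hc hs
  · exact integrable_mul_cutoff hΩ hf.continuousOn hdξ (hc.fderiv_apply (𝕜 := ℝ) v)
      ((tsupport_fderiv_apply_subset' ξ v).trans hs)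
  · exact integrable_mul_cutoff hΩ hf.continuousOn hξ.continuous hc hs
  · intro x hx
    exact (hf.contDiffAt (hΩ.mem_nhds (hs hx))).differentiableAt (by norm_num)
  · intro x _
    exact hξ.differentiable (by norm_num) x

lemma fderiv_apply_eq_inner {N : ℕ} (f : EE N → ℝ) (x v : EE N) :
    fderiv ℝ f x v = inner ℝ (gradient f x) v := by
  simp [gradient]

lemma gradient_coord {N : ℕ} (f : EE N → ℝ) (x : EE N) (i : Fin N) :
    gradient f x i = fderiv ℝ f x (EuclideanSpace.single i 1) := by
  rw [fderiv_apply_eq_inner]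
  rw [EuclideanSpace.inner_single_right]
  simp

lemma inner_gradient_eq_sum {N : ℕ} (f g : EE N → ℝ) (x : EE N) :
    inner ℝ (gradient f x) (gradient g x) = ∑ i, fderiv ℝ f x (EuclideanSpace.single i 1) *
      fderiv ℝ g x (EuclideanSpace.single i 1) := by
  rw [PiLp.inner_apply]
  refine Finset.sum_congr rfl fun i _ => ?_
  rw [gradient_coord, gradient_coord]
  simp [mul_comm]

lemma norm_gradient {N : ℕ} (f : EE N → ℝ) (x : EE N) : ‖gradient f x‖ = ‖fderiv ℝ f x‖ := by
  simp [gradient]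

lemma contDiffOn_fderiv_apply {N : ℕ} {Ω : Set (EE N)} (hΩ : IsOpen Ω) {f : EE N → ℝ}
    (hf : ContDiffOn ℝ 2 f Ω) (v : EE N) : ContDiffOn ℝ 1 (fun y => fderiv ℝ f y v) Ω :=
  (hf.fderiv_of_isOpen hΩ (by norm_num)).clm_apply contDiffOn_const

lemma continuousOn_lap {N : ℕ} {Ω : Set (EE N)} (hΩ : IsOpen Ω) {f : EE N → ℝ}
    (hf : ContDiffOn ℝ 2 f Ω) : ContinuousOn (lap f) Ω := by
  unfold lap
  refine continuousOn_finsetSum _ fun i _ => ?_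
  exact ((contDiffOn_fderiv_apply hΩ hf _).continuousOn_fderiv_of_isOpen hΩ le_rfl).clm_apply
    continuousOn_const

/-- Green formula. -/
lemma green {N : ℕ} {Ω : Set (EE N)} (hΩ : IsOpen Ω) {f ξ : EE N → ℝ}
    (hf : ContDiffOn ℝ 2 f Ω) (hξ : ContDiff ℝ 1 ξ) (hc : HasCompactSupport ξ)
    (hs : tsupport ξ ⊆ Ω) :
    ∫ x, inner ℝ (gradient f x) (gradient ξ x) = ∫ x, (- lap f x) * ξ x := by
  simp_rw [inner_gradient_eq_sum, lap]
  have hd : ∀ i : Fin N, ContDiffOn ℝ 1 (fun y => fderiv ℝ f y (EuclideanSpace.single i 1)) Ω :=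
    fun i => contDiffOn_fderiv_apply hΩ hf _
  rw [integral_finsetSum]
  · simp_rw [ibp hΩ (hd _) hξ hc hs]
    simp_rw [neg_mul, Finset.sum_mul]
    rw [integral_neg, integral_finsetSum]
    · simp
    · intro i _
      refine integrable_mul_cutoff hΩ ?_ hξ.continuous hc hs
      exact ((hd i).continuousOn_fderiv_of_isOpen hΩ le_rfl).clm_apply continuousOn_const
  · intro i _
    refine integrable_mul_cutoff hΩ (hd i).continuousOn ?_ (hc.fderiv_apply (𝕜 := ℝ) _)
      ((tsupport_fderiv_apply_subset' ξ _).trans hs)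
    exact (hξ.continuous_fderiv (by norm_num)).clm_apply continuous_const

/-- Second Green formula. -/
lemma green2 {N : ℕ} {Ω : Set (EE N)} (hΩ : IsOpen Ω) {f ξ : EE N → ℝ}
    (hf : ContDiffOn ℝ 2 f Ω) (hξ : ContDiff ℝ 2 ξ) (hc : HasCompactSupport ξ)
    (hs : tsupport ξ ⊆ Ω) :
    ∫ x, (- lap f x) * ξ x = ∫ x, f x * (- lap ξ x) := by
  rw [← green hΩ hf (hξ.of_le (by norm_num)) hc hs]
  simp_rw [inner_gradient_eq_sum, lap]
  have hd : ∀ i : Fin N, ContDiff ℝ 1 (fun y => fderiv ℝ ξ y (EuclideanSpace.single i 1)) :=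
    fun i => (hξ.fderiv_right (by norm_num)).clm_apply contDiff_const
  have hcd : ∀ i : Fin N, HasCompactSupport (fun y => fderiv ℝ ξ y (EuclideanSpace.single i 1)) :=
    fun i => hc.fderiv_apply (𝕜 := ℝ) _
  have hsd : ∀ i : Fin N, tsupport (fun y => fderiv ℝ ξ y (EuclideanSpace.single i 1)) ⊆ Ω :=
    fun i => (tsupport_fderiv_apply_subset' ξ _).trans hs
  have hf1 : ContDiffOn ℝ 1 f Ω := hf.of_le (by norm_num)
  rw [integral_finsetSum]
  · simp_rw [mul_neg, Finset.mul_sum]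
    rw [integral_neg, integral_finsetSum]
    · simp_rw [ibp hΩ hf1 (hd _) (hcd _) (hsd _)]
      simp
    · intro i _
      refine integrable_mul_cutoff hΩ hf.continuousOn ?_ ((hcd i).fderiv_apply (𝕜 := ℝ) _)
        ((tsupport_fderiv_apply_subset' _ _).trans (hsd i))
      exact ((hd i).continuous_fderiv (by norm_num)).clm_apply continuous_const
  · intro i _
    refine integrable_mul_cutoff hΩ ?_ (hd i).continuous (hcd i) (hsd i)
    exact (contDiffOn_fderiv_apply hΩ hf _).continuousOn

lemma lap_comp {N : ℕ} {Ω : Set (EE N)} (hΩ : IsOpen Ω) {f : EE N → ℝ}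
    (hf : ContDiffOn ℝ 2 f Ω) {h h1 h2 : ℝ → ℝ} {S : Set ℝ} (hS : ∀ x ∈ Ω, f x ∈ S)
    (hh : ∀ t ∈ S, HasDerivAt h (h1 t) t) (hh1 : ∀ t ∈ S, HasDerivAt h1 (h2 t) t)
    {x : EE N} (hx : x ∈ Ω) :
    lap (fun y => h (f y)) x = h2 (f x) * ‖gradient f x‖ ^ 2 + h1 (f x) * lap f x := by
  have hfd : ∀ y ∈ Ω, HasFDerivAt f (fderiv ℝ f y) y := fun y hy =>
    ((hf.contDiffAt (hΩ.mem_nhds hy)).differentiableAt (by norm_num)).hasFDerivAt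
  have e1 : ∀ y ∈ Ω, ∀ v, fderiv ℝ (fun y => h (f y)) y v = h1 (f y) * fderiv ℝ f y v := by
    intro y hy v
    have : HasFDerivAt (fun y => h (f y)) (h1 (f y) • fderiv ℝ f y) y :=
      (hh (f y) (hS y hy)).comp_hasFDerivAt y (hfd y hy)
    rw [this.fderiv]; simp
  unfold lap
  rw [← real_inner_self_eq_norm_sq, inner_gradient_eq_sum, Finset.mul_sum, Finset.mul_sum,
    ← Finset.sum_add_distrib]
  refine Finset.sum_congr rfl fun i _ => ?_
  set v : EE N := EuclideanSpace.single i 1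
  have e2 : (fun y => fderiv ℝ (fun y => h (f y)) y v) =ᶠ[nhds x]
      fun y => h1 (f y) * fderiv ℝ f y v := by
    filter_upwards [hΩ.mem_nhds hx] with y hy using e1 y hy v
  rw [e2.fderiv_eq]
  have d1 : HasFDerivAt (fun y => h1 (f y)) (h2 (f x) • fderiv ℝ f x) x :=
      (hh1 (f x) (hS x hx)).comp_hasFDerivAt x (hfd x hx)
  have d2 : HasFDerivAt (fun y => fderiv ℝ f y v) (fderiv ℝ (fun y => fderiv ℝ f y v) x) x :=
    (((contDiffOn_fderiv_apply hΩ hf v).contDiffAt (hΩ.mem_nhds hx)).differentiableAt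
      (by norm_num)).hasFDerivAt
  have d3 : HasFDerivAt (fun y => h1 (f y) * fderiv ℝ f y v) _ x := d1.mul d2
  rw [d3.fderiv]
  simp
  ring

lemma fderiv_cmul {N : ℕ} (f : EE N → ℝ) (c : ℝ) (x v : EE N) :
    fderiv ℝ (fun z => c * f z) x v = c * fderiv ℝ f x v := by
  have : fderiv ℝ (fun z => c • f z) x = c • fderiv ℝ f x := by
    exact congrFun (fderiv_const_smul_field (f := f) c) x
  simp only [smul_eq_mul] at this
  rw [this]; simp

lemma fderiv_affine {N : ℕ} (f : EE N → ℝ) (y : EE N) (r : ℝ) (x v : EE N) :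
    fderiv ℝ (fun z => f (y + r • z)) x v = r * fderiv ℝ f (y + r • x) v := by
  have h1 : fderiv ℝ (fun z => f (y + r • z)) x = r • fderiv ℝ (fun z => f (y + z)) (r • x) :=
    fderiv_comp_smul (f := fun z => f (y + z)) r
  rw [h1, fderiv_comp_add_left]
  simp

lemma lap_affine {N : ℕ} (f : EE N → ℝ) (y : EE N) (r : ℝ) (x : EE N) :
    lap (fun z => f (y + r • z)) x = r ^ 2 * lap f (y + r • x) := by
  unfold lap
  rw [Finset.mul_sum]
  refine Finset.sum_congr rfl fun i _ => ?_
  simp_rw [fderiv_affine]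
  rw [fderiv_cmul, fderiv_affine (fun z => fderiv ℝ f z (EuclideanSpace.single i 1))]
  ring

lemma lap_const_mul {N : ℕ} (f : EE N → ℝ) (c : ℝ) (x : EE N) :
    lap (fun z => c * f z) x = c * lap f x := by
  unfold lap
  rw [Finset.mul_sum]
  refine Finset.sum_congr rfl fun i _ => ?_
  have : (fun z => fderiv ℝ (fun w => c * f w) z (EuclideanSpace.single i 1)) =
    fun z => c * fderiv ℝ f z (EuclideanSpace.single i 1) := by
    funext z
    rw [fderiv_cmul]
  rw [this, fderiv_cmul]

lemma lap_add_const {N : ℕ} (f : EE N → ℝ) (c : ℝ) (x : EE N) :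
    lap (fun z => f z + c) x = lap f x := by
  unfold lap
  refine Finset.sum_congr rfl fun i _ => ?_
  simp_rw [fderiv_add_const]

lemma lap_sub {N : ℕ} {Ω : Set (EE N)} (hΩ : IsOpen Ω) {f g : EE N → ℝ}
    (hf : ContDiffOn ℝ 2 f Ω) (hg : ContDiffOn ℝ 2 g Ω) {x : EE N} (hx : x ∈ Ω) :
    lap (fun z => f z - g z) x = lap f x - lap g x := by
  unfold lap
  rw [← Finset.sum_sub_distrib]
  refine Finset.sum_congr rfl fun i _ => ?_
  set v : EE N := EuclideanSpace.single i 1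
  have e2 : (fun y => fderiv ℝ (fun z => f z - g z) y v) =ᶠ[nhds x]
      fun y => fderiv ℝ f y v - fderiv ℝ g y v := by
    filter_upwards [hΩ.mem_nhds hx] with y hy
    have := fderiv_fun_sub ((hf.contDiffAt (hΩ.mem_nhds hy)).differentiableAt (by norm_num))
      ((hg.contDiffAt (hΩ.mem_nhds hy)).differentiableAt (by norm_num))
    rw [this]; simp
  rw [e2.fderiv_eq, fderiv_fun_sub]
  · simp
  · exact ((contDiffOn_fderiv_apply hΩ hf v).contDiffAt (hΩ.mem_nhds hx)).differentiableAt
      (by norm_num)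
  · exact ((contDiffOn_fderiv_apply hΩ hg v).contDiffAt (hΩ.mem_nhds hx)).differentiableAt
      (by norm_num)

/-- smooth convex truncation of the positive part -/
def gtr (δ t : ℝ) : ℝ := ∫ x in (0:ℝ)..t, Real.smoothTransition (x / δ)

lemma gtr_cont (δ : ℝ) : Continuous (fun x : ℝ => Real.smoothTransition (x / δ)) :=
  Real.smoothTransition.continuous.comp (continuous_id.div_const δ)

lemma gtr_hasDerivAt (δ t : ℝ) : HasDerivAt (gtr δ) (Real.smoothTransition (t / δ)) t := by
  exact intervalIntegral.integral_hasDerivAt_right ((gtr_cont δ).intervalIntegrable _ _)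
    ((gtr_cont δ).stronglyMeasurableAtFilter _ _) (gtr_cont δ).continuousAt

lemma gtr_hasDerivAt2 (δ t : ℝ) : HasDerivAt (fun t => Real.smoothTransition (t / δ))
    (deriv Real.smoothTransition (t / δ) / δ) t := by
  have h1 : HasDerivAt Real.smoothTransition (deriv Real.smoothTransition (t / δ)) (t / δ) :=
    ((Real.smoothTransition.contDiff (n := 1)).differentiable (by norm_num) _).hasDerivAt
  have h2 : HasDerivAt (fun t : ℝ => t / δ) (1 / δ) t := (hasDerivAt_id t).div_const δ
  have := h1.comp t h2
  rw [mul_one_div] at this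
  exact this

lemma deriv_st_nonneg (t : ℝ) : 0 ≤ deriv Real.smoothTransition t :=
  Real.smoothTransition.monotone.deriv_nonneg

lemma gtr_of_nonpos {δ t : ℝ} (hδ : 0 < δ) (ht : t ≤ 0) : gtr δ t = 0 := by
  unfold gtr
  rw [intervalIntegral.integral_congr (g := fun _ => (0:ℝ))]
  · simp
  · intro x hx
    rw [uIcc_of_ge ht] at hx
    exact Real.smoothTransition.zero_of_nonpos (div_nonpos_of_nonpos_of_nonneg hx.2 hδ.le)

lemma gtr_mono (δ : ℝ) : Monotone (gtr δ) := by
  apply monotone_of_deriv_nonneg (fun t => (gtr_hasDerivAt δ t).differentiableAt)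
  intro t
  rw [(gtr_hasDerivAt δ t).deriv]
  exact Real.smoothTransition.nonneg _

lemma gtr_nonneg {δ : ℝ} (hδ : 0 < δ) (t : ℝ) : 0 ≤ gtr δ t := by
  rcases le_total t 0 with h | h
  · rw [gtr_of_nonpos hδ h]
  · rw [← gtr_of_nonpos hδ le_rfl]; exact gtr_mono δ h

lemma gtr_le {δ : ℝ} (hδ : 0 < δ) (t : ℝ) : gtr δ t ≤ max t 0 := by
  rcases le_total t 0 with h | h
  · rw [gtr_of_nonpos hδ h]; exact le_max_right _ _
  · refine le_trans ?_ (le_max_left _ _)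
    have hm : Monotone (fun t => t - gtr δ t) := by
      have hd : ∀ t, HasDerivAt (fun t => t - gtr δ t) (1 - Real.smoothTransition (t / δ)) t :=
        fun t => (hasDerivAt_id t).sub (gtr_hasDerivAt δ t)
      apply monotone_of_deriv_nonneg (fun t => (hd t).differentiableAt)
      intro t
      rw [(hd t).deriv]
      linarith [Real.smoothTransition.le_one (t / δ)]
    have := hm h
    simp only [gtr_of_nonpos hδ le_rfl] at this
    linarith

lemma le_gtr {δ : ℝ} (hδ : 0 < δ) (t : ℝ) : t - δ ≤ gtr δ t := by
  rcases le_total t δ with h | h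
  · linarith [gtr_nonneg hδ t]
  · have hm : MonotoneOn (fun t => gtr δ t - t) (Ici δ) := by
      have hd : ∀ t, HasDerivAt (fun t => gtr δ t - t) (Real.smoothTransition (t / δ) - 1) t :=
        fun t => (gtr_hasDerivAt δ t).sub (hasDerivAt_id t)
      apply monotoneOn_of_deriv_nonneg (convex_Ici δ)
      · exact fun t _ => (hd t).continuousAt.continuousWithinAt
      · exact fun t _ => (hd t).differentiableAt.differentiableWithinAt
      · intro t ht
        rw [(hd t).deriv, Real.smoothTransition.one_of_one_le]
        · simp
        · rw [interior_Ici] at ht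
          rw [le_div_iff₀ hδ]; linarith [mem_Ioi.1 ht]
    have := hm (mem_Ici.2 le_rfl) (mem_Ici.2 h) h
    simp only at this
    linarith [gtr_nonneg hδ δ]

lemma gtr_contDiff (δ : ℝ) : ContDiff ℝ 2 (gtr δ) := by
  have : (2 : WithTop ℕ∞) = 1 + 1 := by norm_num
  rw [this, contDiff_succ_iff_deriv]
  refine ⟨fun t => (gtr_hasDerivAt δ t).differentiableAt, by simp, ?_⟩
  have e : deriv (gtr δ) = fun t => Real.smoothTransition (t / δ) :=
    funext fun t => (gtr_hasDerivAt δ t).deriv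
  rw [e]
  exact (Real.smoothTransition.contDiff (n := 1)).comp (contDiff_id.div_const δ)

lemma affine_contDiff {N : ℕ} {n : WithTop ℕ∞} (y : EE N) (r : ℝ) :
    ContDiff ℝ n (fun z : EE N => y + r • z) := by fun_prop

def mvPsi {N : ℕ} (z : EE N) : ℝ := deriv Real.smoothTransition (1 - ‖z‖ ^ 2)
def mvBig {N : ℕ} (z : EE N) : ℝ := Real.smoothTransition (1 - ‖z‖ ^ 2)

lemma mvBig_contDiff {N : ℕ} : ContDiff ℝ 1 (mvBig (N := N)) :=
  (Real.smoothTransition.contDiff (n := 1)).comp (contDiff_const.sub (contDiff_norm_sq ℝ))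

lemma mvPsi_cont {N : ℕ} : Continuous (mvPsi (N := N)) :=
  ((Real.smoothTransition.contDiff (n := 1)).continuous_deriv (by norm_num)).comp
    (continuous_const.sub (continuous_norm.pow 2))

lemma mvPsi_nonneg {N : ℕ} (z : EE N) : 0 ≤ mvPsi z := deriv_st_nonneg _

lemma mvPsi_zero {N : ℕ} {z : EE N} (hz : z ∉ closedBall (0 : EE N) 1) : mvPsi z = 0 := by
  have h1 : 1 < ‖z‖ := by simpa using hz
  have h2 : 1 - ‖z‖ ^ 2 < 0 := by nlinarith
  have : Real.smoothTransition =ᶠ[nhds (1 - ‖z‖ ^ 2)] fun _ => 0 := by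
    filter_upwards [Iio_mem_nhds h2] with t ht
    exact Real.smoothTransition.zero_of_nonpos ht.le
  unfold mvPsi
  rw [this.deriv_eq]; simp

lemma mvBig_tsupport {N : ℕ} : tsupport (mvBig (N := N)) ⊆ closedBall 0 1 := by
  apply closure_minimal _ isClosed_closedBall
  intro z hz
  by_contra h
  have h1 : 1 < ‖z‖ := by simpa using h
  have h2 : 1 - ‖z‖ ^ 2 < 0 := by nlinarith
  exact hz (Real.smoothTransition.zero_of_nonpos h2.le)

lemma mvBig_compact {N : ℕ} : HasCompactSupport (mvBig (N := N)) :=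
  (isCompact_closedBall 0 1).of_isClosed_subset (isClosed_tsupport _) mvBig_tsupport

lemma mvBig_fderiv {N : ℕ} (z v : EE N) :
    fderiv ℝ mvBig z v = -2 * mvPsi z * inner ℝ z v := by
  have h1 : HasDerivAt Real.smoothTransition (deriv Real.smoothTransition (1 - ‖z‖ ^ 2))
      (1 - ‖z‖ ^ 2) :=
    ((Real.smoothTransition.contDiff (n := 1)).differentiable (by norm_num) _).hasDerivAt
  have h2 : HasFDerivAt (fun z : EE N => 1 - ‖z‖ ^ 2) (-(2 • (innerSL ℝ z))) z := by
    have := (hasStrictFDerivAt_norm_sq z).hasFDerivAt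
    exact this.const_sub 1
  have h3 : HasFDerivAt (mvBig (N := N)) _ z := h1.comp_hasFDerivAt z h2
  rw [h3.fderiv]
  simp [mvPsi]
  ring

lemma mvPsi_integral_pos {N : ℕ} (hN : 0 < N) : 0 < ∫ z : EE N, mvPsi z := by
  have hcs : HasCompactSupport (mvPsi (N := N)) :=
    HasCompactSupport.intro (isCompact_closedBall 0 1) fun z hz => mvPsi_zero hz
  obtain ⟨c, hc, hc2⟩ := exists_deriv_eq_slope Real.smoothTransition (zero_lt_one)
    Real.smoothTransition.continuous.continuousOn
    ((Real.smoothTransition.contDiff (n := 1)).differentiable (by norm_num)).differentiableOn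
  simp at hc2
  have hne : mvPsi (EuclideanSpace.single (⟨0, hN⟩ : Fin N) (√(1 - c))) ≠ 0 := by
    unfold mvPsi
    have : ‖(EuclideanSpace.single (⟨0, hN⟩ : Fin N) (√(1 - c)))‖ ^ 2 = 1 - c := by
      simp only [EuclideanSpace.single, PiLp.norm_single]
      rw [Real.norm_eq_abs, sq_abs, Real.sq_sqrt]
      linarith [hc.2]
    rw [this]
    simp [hc2]
  exact mvPsi_cont.integral_pos_of_hasCompactSupport_nonneg_nonzero hcs mvPsi_nonneg hne

lemma mv0 {N : ℕ} {Ω : Set (EE N)} (hΩ : IsOpen Ω) (hB : closedBall 0 2 ⊆ Ω)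
    {f : EE N → ℝ} (hf : ContDiffOn ℝ 2 f Ω) (hl : ∀ x ∈ Ω, 0 ≤ lap f x) :
    f 0 * ∫ z : EE N, mvPsi z ≤ ∫ z in closedBall (0 : EE N) 1, f z * mvPsi z := by
  set F : ℝ → ℝ := fun r => ∫ z in closedBall (0 : EE N) 1, f (r • z) * mvPsi z with hF
  set F' : ℝ → EE N → ℝ := fun r z => fderiv ℝ f (r • z) z * mvPsi z with hF'
  have hin : ∀ r ∈ Ioo (-2 : ℝ) 2, ∀ z ∈ closedBall (0 : EE N) 1, r • z ∈ closedBall (0 : EE N) 2 := by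
    intro r hr z hz
    simp only [mem_closedBall, dist_zero_right] at hz ⊢
    rw [norm_smul, Real.norm_eq_abs]
    have : |r| ≤ 2 := abs_le.2 ⟨hr.1.le, hr.2.le⟩
    nlinarith [norm_nonneg z, abs_nonneg r]
  have hdf : ContinuousOn (fderiv ℝ f) Ω := hf.continuousOn_fderiv_of_isOpen hΩ (by norm_num)
  have hcF : ∀ r ∈ Ioo (-2 : ℝ) 2, ContinuousOn (fun z => f (r • z) * mvPsi z)
      (closedBall (0 : EE N) 1) := by
    intro r hr
    refine ContinuousOn.mul ?_ mvPsi_cont.continuousOn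
    exact (hf.continuousOn.comp (continuous_const_smul r).continuousOn
      fun z hz => hB (hin r hr z hz))
  have hcF' : ∀ r ∈ Ioo (-2 : ℝ) 2, ContinuousOn (fun z => F' r z)
      (closedBall (0 : EE N) 1) := by
    intro r hr
    refine ContinuousOn.mul ?_ mvPsi_cont.continuousOn
    exact (hdf.comp (continuous_const_smul r).continuousOn
      fun z hz => hB (hin r hr z hz)).clm_apply continuousOn_id
  obtain ⟨C1, hC1⟩ := (isCompact_closedBall (0 : EE N) 2).exists_bound_of_continuousOn
    (hdf.mono hB)
  obtain ⟨C2, hC2⟩ := (isCompact_closedBall (0 : EE N) 1).exists_bound_of_continuousOn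
    (mvPsi_cont (N := N)).continuousOn
  have hderiv : ∀ r ∈ Ioo (-2 : ℝ) 2,
      HasDerivAt F (∫ z in closedBall (0 : EE N) 1, F' r z) r := by
    intro r hr
    refine (hasDerivAt_integral_of_dominated_loc_of_deriv_le (bound := fun _ => C1 * C2)
      (Ioo_mem_nhds hr.1 hr.2) ?_ ?_ ?_ ?_ ?_ ?_).2
    · filter_upwards [Ioo_mem_nhds hr.1 hr.2] with r' hr'
      exact (hcF r' hr').aestronglyMeasurable measurableSet_closedBall
    · exact (hcF r hr).integrableOn_compact (isCompact_closedBall 0 1)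
    · exact (hcF' r hr).aestronglyMeasurable measurableSet_closedBall
    · filter_upwards [ae_restrict_mem measurableSet_closedBall] with z hz r' hr'
      rw [hF', norm_mul]
      have h1 := hC1 _ (hin r' hr' z hz)
      have h2 := hC2 z hz
      have h3 : ‖fderiv ℝ f (r' • z) z‖ ≤ C1 := by
        refine (ContinuousLinearMap.le_opNorm _ _).trans ?_
        have : ‖z‖ ≤ 1 := by simpa using hz
        nlinarith [norm_nonneg z, norm_nonneg (fderiv ℝ f (r' • z))]
      exact mul_le_mul h3 h2 (norm_nonneg _) ((norm_nonneg _).trans h3)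
    · exact integrableOn_const (isCompact_closedBall 0 1).measure_ne_top
    · filter_upwards [ae_restrict_mem measurableSet_closedBall] with z hz r' hr'
      have hm := hB (hin r' hr' z hz)
      have h1 : HasFDerivAt f (fderiv ℝ f (r' • z)) (r' • z) :=
        ((hf.contDiffAt (hΩ.mem_nhds hm)).differentiableAt (by norm_num)).hasFDerivAt
      have h2 : HasDerivAt (fun r : ℝ => r • z) z r' := by
        simpa using (hasDerivAt_id r').smul_const z
      exact (h1.comp_hasDerivAt r' h2).mul_const _
  have hsign : ∀ r ∈ Ioo (0 : ℝ) 2, 0 ≤ ∫ z in closedBall (0 : EE N) 1, F' r z := by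
    intro r hr
    have hr' : r ∈ Ioo (-2 : ℝ) 2 := ⟨by linarith [hr.1], hr.2⟩
    set Ωr : Set (EE N) := (fun z => (0 : EE N) + r • z) ⁻¹' Ω with hΩr
    have hcont : Continuous (fun z : EE N => (0 : EE N) + r • z) := by fun_prop
    have hor : IsOpen Ωr := hΩ.preimage hcont
    have hfr : ContDiffOn ℝ 2 (fun z => f ((0 : EE N) + r • z)) Ωr := by
      refine hf.comp ?_ (fun z hz => hz)
      exact (affine_contDiff _ _).contDiffOn
    have hsub : tsupport (mvBig (N := N)) ⊆ Ωr := by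
      refine mvBig_tsupport.trans fun z hz => ?_
      simp only [hΩr, mem_preimage, zero_add]
      exact hB (hin r hr' z hz)
    have hg := green hor hfr mvBig_contDiff mvBig_compact hsub
    have h1 : ∫ z, inner ℝ (gradient (fun z => f ((0 : EE N) + r • z)) z) (gradient mvBig z)
        = -(2 * r) * ∫ z in closedBall (0 : EE N) 1, F' r z := by
      rw [setIntegral_eq_integral_of_forall_compl_eq_zero, ← integral_const_mul]
      · congr 1
        funext z
        rw [real_inner_comm, ← fderiv_apply_eq_inner, mvBig_fderiv, real_inner_comm,
          ← fderiv_apply_eq_inner, fderiv_affine]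
        simp only [hF', zero_add]
        ring
      · intro z hz
        simp only [hF', mvPsi_zero hz, mul_zero]
    have h2 : ∫ z, (- lap (fun z => f ((0 : EE N) + r • z)) z) * mvBig z ≤ 0 := by
      apply integral_nonpos
      intro z
      by_cases hz : z ∈ tsupport (mvBig (N := N))
      · have := hl _ (hsub hz)
        simp only [Pi.zero_apply]
        rw [lap_affine, neg_mul, neg_nonpos]
        exact mul_nonneg (mul_nonneg (sq_nonneg r) this) (Real.smoothTransition.nonneg _)
      · simp [image_eq_zero_of_notMem_tsupport hz]
    rw [← hg, h1] at h2
    have := hr.1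
    nlinarith
  have hmono : MonotoneOn F (Icc 0 1) := by
    apply monotoneOn_of_deriv_nonneg (convex_Icc 0 1)
    · intro r hr
      exact (hderiv r ⟨by linarith [hr.1], by linarith [hr.2]⟩).continuousAt.continuousWithinAt
    · intro r hr
      rw [interior_Icc] at hr
      exact (hderiv r ⟨by linarith [hr.1], by linarith [hr.2]⟩).differentiableAt.differentiableWithinAt
    · intro r hr
      rw [interior_Icc] at hr
      rw [(hderiv r ⟨by linarith [hr.1], by linarith [hr.2]⟩).deriv]
      exact hsign r ⟨hr.1, by linarith [hr.2]⟩
  have := hmono (left_mem_Icc.2 zero_le_one) (right_mem_Icc.2 zero_le_one) zero_le_one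
  simp only [hF, zero_smul, one_smul] at this
  rwa [integral_const_mul, setIntegral_eq_integral_of_forall_compl_eq_zero
    (fun z hz => mvPsi_zero hz)] at this

/-- Local sup bound for nonnegative subharmonic functions on the unit ball. -/
lemma mv1 {N : ℕ} (hN : 0 < N) : ∃ K : ℝ, 0 < K ∧ ∀ (Ω : Set (EE N)), IsOpen Ω →
    closedBall 0 1 ⊆ Ω → ∀ f : EE N → ℝ, ContDiffOn ℝ 2 f Ω → (∀ x ∈ Ω, 0 ≤ lap f x) →
    (∀ x ∈ Ω, 0 ≤ f x) → ∀ x ∈ closedBall (0 : EE N) (1 / 2),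
      f x ≤ K * ∫ z in closedBall (0 : EE N) (3 / 4), f z := by
  obtain ⟨C2, hC2⟩ := (isCompact_closedBall (0 : EE N) 1).exists_bound_of_continuousOn
    (mvPsi_cont (N := N)).continuousOn
  have hI := mvPsi_integral_pos hN
  set I := ∫ z : EE N, mvPsi z
  have hC0 : 0 ≤ C2 := (norm_nonneg _).trans (hC2 0 (by simp))
  refine ⟨(C2 + 1) * 8 ^ N / I, by positivity, ?_⟩
  intro Ω hΩ hB f hf hl hp x hx
  set Ωr : Set (EE N) := (fun z => x + (1 / 8 : ℝ) • z) ⁻¹' Ω with hΩr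
  have hcont : Continuous (fun z : EE N => x + (1 / 8 : ℝ) • z) := by fun_prop
  have hor : IsOpen Ωr := hΩ.preimage hcont
  have hfr : ContDiffOn ℝ 2 (fun z => f (x + (1 / 8 : ℝ) • z)) Ωr := by
    refine hf.comp ?_ (fun z hz => hz)
    exact (affine_contDiff _ _).contDiffOn
  have hxn : ‖x‖ ≤ 1 / 2 := by simpa using hx
  have hsub : closedBall (0 : EE N) 2 ⊆ Ωr := by
    intro z hz
    apply hB
    simp only [mem_closedBall, dist_zero_right] at hz ⊢
    refine (norm_add_le _ _).trans ?_
    rw [norm_smul]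
    norm_num
    linarith
  have h0 := mv0 hor hsub hfr (fun z hz => by
    rw [lap_affine]; exact mul_nonneg (sq_nonneg _) (hl _ hz))
  simp only [smul_zero, add_zero] at h0
  have hB2 : closedBall (0 : EE N) (3 / 4) ⊆ Ω :=
    (closedBall_subset_closedBall (by norm_num)).trans hB
  have hIntg : IntegrableOn f (closedBall (0 : EE N) (3 / 4)) :=
    (hf.continuousOn.mono hB2).integrableOn_compact (isCompact_closedBall _ _)
  set f1 : EE N → ℝ := (closedBall (0 : EE N) (3 / 4)).indicator f with hf1
  have hf1int : Integrable f1 := (integrable_indicator_iff measurableSet_closedBall).2 hIntg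
  have hf1n : ∀ z, 0 ≤ f1 z := fun z => indicator_nonneg (fun z hz => hp z (hB2 hz)) z
  have hcomp : Integrable (fun z => f1 (x + (1 / 8 : ℝ) • z)) := by
    have := (hf1int.comp_add_left x)
    exact this.comp_smul (R := (1 / 8 : ℝ)) (by norm_num)
  have hval : ∫ z, f1 (x + (1 / 8 : ℝ) • z) = 8 ^ N * ∫ z, f1 z := by
    have e := Measure.integral_comp_smul (volume : Measure (EE N)) (fun z => f1 (x + z)) (1 / 8 : ℝ)
    rw [e, integral_add_left_eq_self]
    simp
  have h1 : ∫ z in closedBall (0 : EE N) 1, f (x + (1 / 8 : ℝ) • z) * mvPsi z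
      ≤ ∫ z, (C2 + 1) * f1 (x + (1 / 8 : ℝ) • z) := by
    rw [setIntegral_eq_integral_of_forall_compl_eq_zero
      (fun z hz => by rw [mvPsi_zero hz, mul_zero])]
    apply integral_mono_of_nonneg _ (hcomp.const_mul _)
    · refine Filter.Eventually.of_forall fun z => ?_
      simp only
      by_cases hz : z ∈ closedBall (0 : EE N) 1
      · have hm : x + (1 / 8 : ℝ) • z ∈ closedBall (0 : EE N) (3 / 4) := by
          simp only [mem_closedBall, dist_zero_right] at hz ⊢
          refine (norm_add_le _ _).trans ?_
          rw [norm_smul]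
          norm_num
          linarith
        rw [hf1, indicator_of_mem hm, mul_comm]
        have := hC2 z hz
        rw [Real.norm_of_nonneg (mvPsi_nonneg z)] at this
        exact mul_le_mul_of_nonneg_right (by linarith) (hp _ (hB2 hm))
      · rw [mvPsi_zero hz, mul_zero]
        exact mul_nonneg (by linarith) (hf1n _)
    · refine Filter.Eventually.of_forall fun z => ?_
      simp only [Pi.zero_apply]
      by_cases hz : z ∈ closedBall (0 : EE N) 1
      · exact mul_nonneg (hp _ (hsub (closedBall_subset_closedBall (by norm_num) hz)))
          (mvPsi_nonneg z)
      · rw [mvPsi_zero hz, mul_zero]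
  rw [integral_const_mul, hval, hf1, integral_indicator measurableSet_closedBall] at h1
  have h2 := h0.trans h1
  rw [div_mul_eq_mul_div, le_div_iff₀ hI]
  linarith

open scoped Convolution

lemma gradient_eq_zero_off {N : ℕ} {φ : EE N → ℝ} {x : EE N} (hx : x ∉ tsupport φ) :
    gradient φ x = 0 := by
  have : fderiv ℝ φ x = 0 := by
    have h := notMem_tsupport_iff_eventuallyEq.1 hx
    rw [h.fderiv_eq]; simp
  simp [gradient, this]

lemma moll_fderiv {N : ℕ} (b : ContDiffBump (0 : EE N)) {φ : EE N → ℝ} (hφ : ContDiff ℝ 1 φ)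
    (hc : HasCompactSupport φ) (x : EE N) :
    fderiv ℝ (b.normed volume ⋆[ContinuousLinearMap.lsmul ℝ ℝ, volume] φ) x =
      (b.normed volume ⋆[ContinuousLinearMap.lsmul ℝ ℝ, volume] (fderiv ℝ φ)) x := by
  have h := hc.hasFDerivAt_convolution_right (ContinuousLinearMap.lsmul ℝ ℝ) (μ := volume)
    ((b.continuous_normed (μ := volume)).locallyIntegrable) hφ x
  rw [h.fderiv]
  unfold convolution
  congr 1

lemma stab_ext {N : ℕ} {Ω : Set (EE N)} (hΩ : IsOpen Ω) {W : EE N → ℝ} (hW : ContinuousOn W Ω)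
    (A : ℝ)
    (hst : ∀ φ : EE N → ℝ, IsTestFun Ω φ →
      A * ∫ x in Ω, W x * φ x ^ 2 ≤ ∫ x in Ω, ‖gradient φ x‖ ^ 2)
    {φ : EE N → ℝ} (hφ : ContDiff ℝ 1 φ) (hc : HasCompactSupport φ) (hs : tsupport φ ⊆ Ω) :
    A * ∫ x, W x * φ x ^ 2 ≤ ∫ x, ‖gradient φ x‖ ^ 2 := by
  obtain ⟨δ, hδ, hδΩ⟩ := IsCompact.exists_cthickening_subset_open hc hΩ hs
  set K' := cthickening δ (tsupport φ) with hK'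
  have hK'c : IsCompact K' := IsCompact.cthickening hc
  have hb : ∀ n : ℕ, ∃ b : ContDiffBump (0 : EE N), b.rOut = δ / (n + 1) := fun n =>
    ⟨⟨δ / (n + 1) / 2, δ / (n + 1), by positivity, half_lt_self (by positivity)⟩, rfl⟩
  choose b hbr using hb
  have hblim : Filter.Tendsto (fun n => (b n).rOut) Filter.atTop (nhds 0) := by
    simp_rw [hbr]
    exact tendsto_const_div_atTop_nhds_zero_nat δ |>.comp (Filter.tendsto_add_atTop_nat 1) |>.congr
      (fun n => by simp)
  have hble : ∀ n, (b n).rOut ≤ δ := by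
    intro n; rw [hbr]
    apply div_le_self hδ.le
    have : (0:ℝ) ≤ n := by positivity
    linarith
  set ψ : ℕ → EE N → ℝ := fun n =>
    ((b n).normed volume ⋆[ContinuousLinearMap.lsmul ℝ ℝ, volume] φ) with hψ
  have hfd : ∀ n x, fderiv ℝ (ψ n) x = ((b n).normed volume
      ⋆[ContinuousLinearMap.lsmul ℝ ℝ, volume] (fderiv ℝ φ)) x := fun n x =>
    moll_fderiv (b n) hφ hc x
  have hcdf : Continuous (fderiv ℝ φ) := hφ.continuous_fderiv (by norm_num)
  have hsm : ∀ n, ContDiff ℝ (⊤ : ℕ∞) (ψ n) := by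
    intro n
    exact ((b n).hasCompactSupport_normed).contDiff_convolution_left _
      ((b n).contDiff_normed) hφ.continuous.locallyIntegrable
  have hts : ∀ n, tsupport (ψ n) ⊆ K' := by
    intro n
    apply closure_minimal _ isClosed_cthickening
    intro x hx
    have := support_convolution_subset (L := ContinuousLinearMap.lsmul ℝ ℝ) (μ := volume) hx
    obtain ⟨u, hu, v, hv, rfl⟩ := this
    rw [(b n).support_normed_eq] at hu
    refine mem_cthickening_of_dist_le _ v δ _ (subset_tsupport _ hv) ?_
    rw [mem_ball_zero_iff] at hu
    simp only [dist_eq_norm, add_sub_cancel_right]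
    exact hu.le.trans (hble n)
  have hcs : ∀ n, HasCompactSupport (ψ n) := fun n =>
    hK'c.of_isClosed_subset (isClosed_tsupport _) (hts n)
  have hlim : ∀ x, Filter.Tendsto (fun n => ψ n x) Filter.atTop (nhds (φ x)) := fun x =>
    ContDiffBump.convolution_tendsto_right_of_continuous hblim hφ.continuous x
  have hlim' : ∀ x, Filter.Tendsto (fun n => fderiv ℝ (ψ n) x) Filter.atTop
      (nhds (fderiv ℝ φ x)) := fun x => by
    simp_rw [hfd]
    exact ContDiffBump.convolution_tendsto_right_of_continuous hblim hcdf x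
  obtain ⟨M, hM⟩ := hc.exists_bound_of_continuous hφ.continuous
  obtain ⟨M', hM'⟩ := (hc.fderiv (𝕜 := ℝ)).exists_bound_of_continuous hcdf
  have hbd : ∀ n x, ‖ψ n x‖ ≤ 3 * M := by
    intro n x
    have h1 : dist (ψ n x) (φ x) ≤ 2 * M := by
      refine ContDiffBump.dist_normed_convolution_le hφ.continuous.aestronglyMeasurable ?_
      intro z _
      rw [dist_eq_norm]
      linarith [norm_sub_le (φ z) (φ x), hM z, hM x]
    rw [dist_eq_norm] at h1
    have := norm_sub_norm_le (ψ n x) (φ x)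
    linarith [hM x]
  have hbd' : ∀ n x, ‖fderiv ℝ (ψ n) x‖ ≤ 3 * M' := by
    intro n x
    have h1 : dist (fderiv ℝ (ψ n) x) (fderiv ℝ φ x) ≤ 2 * M' := by
      rw [hfd]
      refine ContDiffBump.dist_normed_convolution_le hcdf.aestronglyMeasurable ?_
      intro z _
      rw [dist_eq_norm]
      linarith [norm_sub_le (fderiv ℝ φ z) (fderiv ℝ φ x), hM' z, hM' x]
    rw [dist_eq_norm] at h1
    have := norm_sub_norm_le (fderiv ℝ (ψ n) x) (fderiv ℝ φ x)
    linarith [hM' x]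
  obtain ⟨C, hC⟩ := hK'c.exists_bound_of_continuousOn (hW.mono hδΩ)
  have hin : ∀ n, A * ∫ x, W x * ψ n x ^ 2 ≤ ∫ x, ‖gradient (ψ n) x‖ ^ 2 := by
    intro n
    have := hst (ψ n) ⟨hsm n, hcs n, (hts n).trans hδΩ⟩
    rwa [setIntegral_eq_integral_of_forall_compl_eq_zero,
      setIntegral_eq_integral_of_forall_compl_eq_zero] at this
    · intro x hx
      rw [gradient_eq_zero_off (fun h => hx (hδΩ (hts n h)))]; simp
    · intro x hx
      rw [image_eq_zero_of_notMem_tsupport (fun h => hx (hδΩ (hts n h)))]; simp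
  have hmeas : ∀ n, AEStronglyMeasurable (fun x => W x * ψ n x ^ 2) volume := by
    intro n
    refine (continuous_mul_cutoff hΩ hW ((hsm n).continuous.pow 2) ?_).aestronglyMeasurable
    refine (closure_mono ?_ : tsupport (fun x => ψ n x ^ 2) ⊆ tsupport (ψ n)).trans
      ((hts n).trans hδΩ)
    intro x hx h
    exact hx (by simp [h])
  have hL1 : Filter.Tendsto (fun n => ∫ x, W x * ψ n x ^ 2) Filter.atTop
      (nhds (∫ x, W x * φ x ^ 2)) := by
    refine tendsto_integral_of_dominated_convergence (K'.indicator fun _ => C * (3 * M) ^ 2)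
      hmeas ?_ ?_ ?_
    · rw [integrable_indicator_iff hK'c.measurableSet]
      exact integrableOn_const hK'c.measure_ne_top
    · intro n
      refine Filter.Eventually.of_forall fun x => ?_
      by_cases hx : x ∈ K'
      · rw [indicator_of_mem hx, norm_mul, norm_pow]
        exact mul_le_mul (hC x hx) (pow_le_pow_left₀ (norm_nonneg _) (hbd n x) 2)
          (by positivity) ((norm_nonneg _).trans (hC x hx))
      · rw [indicator_of_notMem hx, image_eq_zero_of_notMem_tsupport (fun h => hx (hts n h))]
        simp
    · refine Filter.Eventually.of_forall fun x => ?_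
      exact ((hlim x).pow 2).const_mul _
  have hL2 : Filter.Tendsto (fun n => ∫ x, ‖gradient (ψ n) x‖ ^ 2) Filter.atTop
      (nhds (∫ x, ‖gradient φ x‖ ^ 2)) := by
    simp_rw [norm_gradient]
    refine tendsto_integral_of_dominated_convergence (K'.indicator fun _ => (3 * M') ^ 2)
      ?_ ?_ ?_ ?_
    · intro n
      exact ((((hsm n).continuous_fderiv (by norm_num)).norm).pow 2).aestronglyMeasurable
    · rw [integrable_indicator_iff hK'c.measurableSet]
      exact integrableOn_const hK'c.measure_ne_top
    · intro n
      refine Filter.Eventually.of_forall fun x => ?_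
      by_cases hx : x ∈ K'
      · rw [indicator_of_mem hx, norm_pow, norm_norm]
        exact (pow_le_pow_left₀ (norm_nonneg _) (hbd' n x) 2)
      · rw [indicator_of_notMem hx, ← norm_gradient, gradient_eq_zero_off (fun h => hx (hts n h))]
        simp
    · refine Filter.Eventually.of_forall fun x => ?_
      exact ((hlim' x).norm).pow 2
  exact le_of_tendsto_of_tendsto' (hL1.const_mul A) hL2 hin

lemma gradient_comp_mul {N : ℕ} {f η : EE N → ℝ} {G : ℝ → ℝ} {G1 : ℝ} {x : EE N}
    (hf : DifferentiableAt ℝ f x) (hη : DifferentiableAt ℝ η x) (hG : HasDerivAt G G1 (f x)) :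
    gradient (fun y => G (f y) * η y) x = (G1 * η x) • gradient f x + G (f x) • gradient η x := by
  have h1 : HasFDerivAt (fun y => G (f y)) (G1 • fderiv ℝ f x) x :=
    hG.comp_hasFDerivAt x hf.hasFDerivAt
  have h2 : HasFDerivAt (fun y => G (f y) * η y)
    (G (f x) • fderiv ℝ η x + η x • (G1 • fderiv ℝ f x)) x := h1.mul hη.hasFDerivAt
  unfold gradient
  rw [h2.fderiv]
  simp only [map_add, map_smul, smul_smul]
  rw [add_comm, mul_comm]

lemma integrable_inner_gradient {N : ℕ} {Ω : Set (EE N)} (hΩ : IsOpen Ω) {f ξ : EE N → ℝ}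
    (hf : ContDiffOn ℝ 1 f Ω) (hξ : ContDiff ℝ 1 ξ) (hc : HasCompactSupport ξ)
    (hs : tsupport ξ ⊆ Ω) :
    Integrable (fun x => inner ℝ (gradient f x) (gradient ξ x)) := by
  simp_rw [inner_gradient_eq_sum]
  refine integrable_finsetSum _ fun i _ => ?_
  refine integrable_mul_cutoff hΩ ?_ ?_ (hc.fderiv_apply (𝕜 := ℝ) _)
      ((tsupport_fderiv_apply_subset' ξ _).trans hs)
  · exact (hf.continuousOn_fderiv_of_isOpen hΩ le_rfl).clm_apply continuousOn_const
  · exact (hξ.continuous_fderiv (by norm_num)).clm_apply continuous_const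

lemma gradsq_cont {N : ℕ} {ξ : EE N → ℝ} (hξ : ContDiff ℝ 1 ξ) :
    Continuous (fun x => ‖gradient ξ x‖ ^ 2) := by
  simp_rw [norm_gradient]
  exact ((hξ.continuous_fderiv (by norm_num)).norm).pow 2

lemma gradsq_tsupport {N : ℕ} (ξ : EE N → ℝ) :
    tsupport (fun x => ‖gradient ξ x‖ ^ 2) ⊆ tsupport ξ := by
  apply closure_minimal _ (isClosed_tsupport _)
  intro x hx
  by_contra h
  exact hx (by simp [gradient_eq_zero_off h])

lemma gradsq_compact {N : ℕ} {ξ : EE N → ℝ} (hc : HasCompactSupport ξ) :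
    HasCompactSupport (fun x => ‖gradient ξ x‖ ^ 2) :=
  IsCompact.of_isClosed_subset hc (isClosed_tsupport _) (gradsq_tsupport ξ)

lemma gradsq_integrable {N : ℕ} {ξ : EE N → ℝ} (hξ : ContDiff ℝ 1 ξ)
    (hc : HasCompactSupport ξ) : Integrable (fun x => ‖gradient ξ x‖ ^ 2) :=
  (gradsq_cont hξ).integrable_of_hasCompactSupport (gradsq_compact hc)

lemma sq_tsupport {N : ℕ} (ξ : EE N → ℝ) : tsupport (fun x => ξ x ^ 2) ⊆ tsupport ξ := by
  apply closure_mono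
  intro x hx h
  exact hx (by simp [h])

lemma sq_compact {N : ℕ} {ξ : EE N → ℝ} (hc : HasCompactSupport ξ) :
    HasCompactSupport (fun x => ξ x ^ 2) :=
  IsCompact.of_isClosed_subset hc (isClosed_tsupport _) (sq_tsupport ξ)

lemma vec_ineq {N : ℕ} (a b : EE N) (h δ : ℝ) (hδ : 0 < δ) :
    ‖a + b‖ ^ 2 ≤ (1 + δ) * (‖a‖ ^ 2 + 2 * h * inner ℝ a b)
      + (1 + (1 - (1 + δ) * h) ^ 2 / δ) * ‖b‖ ^ 2 := by
  rw [norm_add_sq_real]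
  set e := 1 - (1 + δ) * h with he
  have key : 0 ≤ ‖δ • a - e • b‖ ^ 2 := sq_nonneg _
  rw [norm_sub_sq_real, norm_smul, norm_smul, inner_smul_left, inner_smul_right] at key
  simp only [Real.norm_eq_abs, mul_pow, sq_abs, RCLike.conj_to_real] at key
  have h1 : 0 ≤ (δ ^ 2 * ‖a‖ ^ 2 - 2 * (δ * (e * inner ℝ a b)) + e ^ 2 * ‖b‖ ^ 2) / δ := by
    positivity
  have h2 : (δ ^ 2 * ‖a‖ ^ 2 - 2 * (δ * (e * inner ℝ a b)) + e ^ 2 * ‖b‖ ^ 2) / δ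
    = δ * ‖a‖ ^ 2 - 2 * (e * inner ℝ a b) + e ^ 2 / δ * ‖b‖ ^ 2 := by
    field_simp
  rw [h2] at h1
  have h3 : e * inner ℝ a b = inner ℝ a b - (1 + δ) * h * inner ℝ a b := by rw [he]; ring
  rw [h3] at h1
  linarith

lemma energy {N : ℕ} {Ω : Set (EE N)} (hΩ : IsOpen Ω) {f η : EE N → ℝ}
    (hf : ContDiffOn ℝ 2 f Ω) {G G1 H H1 : ℝ → ℝ} {h δ : ℝ} (hδ : 0 < δ)
    (hG : ∀ x ∈ Ω, HasDerivAt G (G1 (f x)) (f x)) (hH : ∀ x ∈ Ω, HasDerivAt H (H1 (f x)) (f x))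
    (hGc : ContDiffOn ℝ 1 (fun x => G (f x)) Ω) (hHc : ContDiffOn ℝ 1 (fun x => H (f x)) Ω)
    (h1 : ∀ x ∈ Ω, G1 (f x) ^ 2 ≤ H1 (f x))
    (h2 : ∀ x ∈ Ω, H (f x) = h * (G (f x) * G1 (f x)))
    (hη : ContDiff ℝ 1 η) (hc : HasCompactSupport η) (hs : tsupport η ⊆ Ω) :
    ∫ x, ‖gradient (fun y => G (f y) * η y) x‖ ^ 2 ≤
      (1 + δ) * (∫ x, (- lap f x) * (H (f x) * η x ^ 2))
      + (1 + (1 - (1 + δ) * h) ^ 2 / δ) * ∫ x, G (f x) ^ 2 * ‖gradient η x‖ ^ 2 := by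
  have hη2 : ContDiff ℝ 1 (fun x => η x ^ 2) := hη.pow 2
  have hs2 : tsupport (fun x => η x ^ 2) ⊆ Ω := (sq_tsupport η).trans hs
  have hξ : ContDiff ℝ 1 (fun x => H (f x) * η x ^ 2) := contDiff_mul_cutoff hΩ hHc hη2 hs2
  have hξc : HasCompactSupport (fun x => H (f x) * η x ^ 2) := (sq_compact hc).mul_left
  have hξs : tsupport (fun x => H (f x) * η x ^ 2) ⊆ Ω := tsupport_mul_cutoff.trans hs2
  have hφ : ContDiff ℝ 1 (fun x => G (f x) * η x) := contDiff_mul_cutoff hΩ hGc hη hs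
  have hφc : HasCompactSupport (fun x => G (f x) * η x) := hc.mul_left
  rw [← green hΩ hf hξ hξc hξs, ← integral_const_mul, ← integral_const_mul, ← integral_add]
  · apply integral_mono (gradsq_integrable hφ hφc)
    · refine ((integrable_inner_gradient hΩ (hf.of_le (by norm_num)) hξ hξc hξs).const_mul _).add
        (Integrable.const_mul ?_ _)
      exact integrable_mul_cutoff hΩ (hGc.continuousOn.pow 2) (gradsq_cont hη) (gradsq_compact hc)
        ((gradsq_tsupport η).trans hs)
    · intro x
      simp only
      by_cases hx : x ∈ tsupport η
      · have hxΩ := hs hx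
        have hfd := (hf.contDiffAt (hΩ.mem_nhds hxΩ)).differentiableAt (by norm_num)
        have hηd := hη.differentiable (by norm_num) x
        rw [gradient_comp_mul hfd hηd (hG x hxΩ),
          gradient_comp_mul hfd (hη2.differentiable (by norm_num) x) (hH x hxΩ)]
        have hsq : gradient (fun x => η x ^ 2) x = (2 * η x) • gradient η x := by
          have e := gradient_comp_mul (G := fun t => t) hηd hηd (hasDerivAt_id _)
          simp only [one_mul] at e
          have e' : (fun x => η x ^ 2) = fun y => η y * η y := by funext y; ring
          rw [e', e, ← add_smul]; congr 1; ring
        rw [hsq]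
        refine (vec_ineq _ _ h δ hδ).trans ?_
        rw [norm_smul (G (f x)), mul_pow, Real.norm_eq_abs, sq_abs]
        have hle : ‖(G1 (f x) * η x) • gradient f x‖ ^ 2 + 2 * h *
            inner ℝ ((G1 (f x) * η x) • gradient f x) (G (f x) • gradient η x) ≤
            inner ℝ (gradient f x) ((H1 (f x) * η x ^ 2) • gradient f x
              + H (f x) • (2 * η x) • gradient η x) := by
          rw [norm_smul, inner_add_right, inner_smul_left, inner_smul_right, inner_smul_right,
            inner_smul_right, inner_smul_right, real_inner_self_eq_norm_sq, mul_pow,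
            Real.norm_eq_abs, sq_abs, h2 x hxΩ]
          simp only [RCLike.conj_to_real]
          have := mul_le_mul_of_nonneg_right (h1 x hxΩ)
            (by positivity : 0 ≤ η x ^ 2 * ‖gradient f x‖ ^ 2)
          linarith
        have := mul_le_mul_of_nonneg_left hle (by linarith : 0 ≤ 1 + δ)
        linarith
      · rw [gradient_eq_zero_off (fun hh => hx (tsupport_mul_cutoff hh)),
          gradient_eq_zero_off (fun hh => hx (sq_tsupport η (tsupport_mul_cutoff hh))),
          gradient_eq_zero_off hx]
        simp
  · exact (integrable_inner_gradient hΩ (hf.of_le (by norm_num)) hξ hξc hξs).const_mul _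
  · refine Integrable.const_mul ?_ _
    exact integrable_mul_cutoff hΩ (hGc.continuousOn.pow 2) (gradsq_cont hη) (gradsq_compact hc)
        ((gradsq_tsupport η).trans hs)

/-- Sobolev inequality with real integrals. -/
lemma sobolev {N : ℕ} (hN : 3 ≤ N) : ∃ C : ℝ, 0 < C ∧ ∀ φ : EE N → ℝ, ContDiff ℝ 1 φ →
    HasCompactSupport φ →
    (∫ x, |φ x| ^ (2 * ((N : ℝ) / (N - 2)))) ^ (((N : ℝ) - 2) / N) ≤
      C * ∫ x, ‖gradient φ x‖ ^ 2 := by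
  have hN' : (3 : ℝ) ≤ N := by exact_mod_cast hN
  have hN2 : (0:ℝ) < N - 2 := by linarith
  set P : NNReal := ⟨2 * ((N : ℝ) / (N - 2)), by positivity⟩ with hP
  have hPr : (P : ℝ) = 2 * ((N : ℝ) / (N - 2)) := rfl
  have hPpos : (0:ℝ) < P := by rw [hPr]; positivity
  set c := eLpNormLESNormFDerivOfEqInnerConst (volume : Measure (EE N)) (2 : ℝ) with hc
  refine ⟨(c : ℝ) ^ 2 + 1, by positivity, ?_⟩
  intro φ hφ hφc
  have hfr : Module.finrank ℝ (EE N) = N := by simp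
  have h := eLpNorm_le_eLpNorm_fderiv_of_eq_inner (volume : Measure (EE N)) hφ hφc
    (p := 2) (p' := P) (by norm_num) (by rw [hfr]; omega) (by
      rw [hfr, hPr]
      have : (N:ℝ) ≠ 0 := by positivity
      push_cast
      field_simp)
  have hm1 : MemLp φ P volume := hφ.continuous.memLp_of_hasCompactSupport hφc
  have hm2 : MemLp (fderiv ℝ φ) (2 : NNReal) volume :=
    (hφ.continuous_fderiv (by norm_num)).memLp_of_hasCompactSupport (hφc.fderiv (𝕜 := ℝ))
  have hP0 : (P : ENNReal) ≠ 0 := by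
    simp only [ne_eq, ENNReal.coe_eq_zero]
    intro h0; rw [h0] at hPpos; simp at hPpos
  rw [hm1.eLpNorm_eq_integral_rpow_norm hP0 ENNReal.coe_ne_top,
    hm2.eLpNorm_eq_integral_rpow_norm (by norm_num) ENNReal.coe_ne_top] at h
  simp only [ENNReal.coe_toReal, NNReal.coe_ofNat] at h
  rw [← ENNReal.ofReal_coe_nnreal, ← ENNReal.ofReal_mul (by positivity),
    ENNReal.ofReal_le_ofReal_iff (by positivity)] at h
  have hs := pow_le_pow_left₀ (by positivity) h 2
  have e1 : ((∫ x, ‖φ x‖ ^ (P:ℝ)) ^ (P:ℝ)⁻¹) ^ 2 = (∫ x, |φ x| ^ (2 * ((N : ℝ) / (N - 2)))) ^ (((N : ℝ) - 2) / N) := by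
    rw [← Real.rpow_natCast, ← Real.rpow_mul (by positivity)]
    simp only [Real.norm_eq_abs]
    rw [hPr]
    congr 1
    push_cast
    have : (N:ℝ) ≠ 0 := by positivity
    field_simp
  have e2 : (((c:NNReal) : ℝ) * (∫ x, ‖fderiv ℝ φ x‖ ^ (2:ℝ)) ^ (2:ℝ)⁻¹) ^ 2 = (c:ℝ) ^ 2 * ∫ x, ‖gradient φ x‖ ^ 2 := by
    rw [mul_pow]
    congr 1
    rw [← Real.rpow_natCast, ← Real.rpow_mul (by positivity)]
    simp only [norm_gradient]
    norm_num
  rw [e1, e2] at hs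
  refine hs.trans ?_
  apply mul_le_mul_of_nonneg_right (by linarith)
  positivity

/-- Jensen inequality on a set of finite measure. -/
lemma jensen {N : ℕ} {B : Set (EE N)} (hB : IsCompact B) (t : ℝ) (ht : 1 ≤ t) {f : EE N → ℝ}
    (hf : ContinuousOn f B) (hp : ∀ x ∈ B, 0 ≤ f x) :
    (∫ x in B, f x) ^ t ≤ (volume.real B + 1) ^ t * ∫ x in B, f x ^ t := by
  have hIntg : IntegrableOn f B := hf.integrableOn_compact hB
  have hcont : ContinuousOn (fun x => f x ^ t) B := hf.rpow_const (fun x _ => Or.inr (by linarith))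
  have hIntg2 : IntegrableOn (fun x => f x ^ t) B := hcont.integrableOn_compact hB
  have hpos2 : 0 ≤ ∫ x in B, f x ^ t :=
    setIntegral_nonneg hB.measurableSet fun x hx => Real.rpow_nonneg (hp x hx) _
  have hpos1 : 0 ≤ ∫ x in B, f x := setIntegral_nonneg hB.measurableSet hp
  by_cases h0 : volume B = 0
  · have : ∫ x in B, f x = 0 := by rw [Measure.restrict_eq_zero.2 h0]; simp
    rw [this, Real.zero_rpow (by linarith)]
    exact mul_nonneg (by positivity) hpos2
  have hv : 0 < volume.real B := by
    rw [Measure.real, ENNReal.toReal_pos_iff]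
    exact ⟨pos_iff_ne_zero.2 h0, hB.measure_lt_top⟩
  have hJ := (convexOn_rpow ht).map_set_average_le
    (Real.continuous_rpow_const (by linarith)).continuousOn isClosed_Ici h0
    hB.measure_ne_top (f := f) ?_ hIntg hIntg2
  · rw [setAverage_eq, setAverage_eq] at hJ
    simp only [smul_eq_mul] at hJ
    set v := volume.real B
    set I := ∫ x in B, f x
    set J := ∫ x in B, f x ^ t
    have e1 : (v⁻¹ * I) ^ t = (v ^ t)⁻¹ * I ^ t := by
      rw [Real.mul_rpow (by positivity) hpos1, Real.inv_rpow hv.le]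
    rw [e1] at hJ
    have hvt : 0 < v ^ t := by positivity
    have h1 : I ^ t ≤ v ^ t * v⁻¹ * J := by
      have := mul_le_mul_of_nonneg_left hJ hvt.le
      rw [mul_inv_cancel_left₀ hvt.ne'] at this
      linarith
    refine h1.trans (mul_le_mul_of_nonneg_right ?_ hpos2)
    have h2 : v ^ t * v⁻¹ = v ^ (t - 1) := by
      rw [Real.rpow_sub_one hv.ne']; rfl
    rw [h2]
    calc v ^ (t - 1) ≤ (v + 1) ^ (t - 1) := Real.rpow_le_rpow hv.le (by linarith) (by linarith)
      _ ≤ (v + 1) ^ t := Real.rpow_le_rpow_of_exponent_le (by linarith) (by linarith)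
  · filter_upwards [ae_restrict_mem hB.measurableSet] with x hx using hp x hx

lemma Lpoly_neg {p θ s₀ t : ℝ} (hp : 1 < p) (hpθ : p ≤ θ) 
    (huniq : ∀ s' : ℝ, 2 < s' → Lpoly p θ s' = 0 → s' = s₀)
    (ht : 2 ≤ t) (hts : t < s₀) : Lpoly p θ t < 0 := by
  have h2 : Lpoly p θ 2 < 0 := by
    unfold Lpoly
    have hθ : 0 < θ + 1 := by linarith
    have e : (2:ℝ) ^ 4 - 16 * p * θ * (p + 1) / (θ + 1) * 2 ^ 2 +
      16 * p * θ * (p + 1) * (p + θ + 2) / (θ + 1) ^ 2 * 2 -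
      16 * p * θ * (p + 1) ^ 2 / (θ + 1) ^ 2 =
      16 * ((θ+1)^2 - p * θ * ((p+1) * (2 * θ + 1 - p))) / (θ + 1) ^ 2 := by
      field_simp; ring
    rw [e]
    apply div_neg_of_neg_of_pos _ (by positivity)
    have h1 : θ + 1 ≤ (2 * θ + 1 - p) := by linarith
    have h4 : 1 < p * (p + 1) - 1 := by nlinarith
    have h3 : θ + 1 < p * θ * (p+1) := by nlinarith
    nlinarith
  by_contra hcon
  push Not at hcon
  have hcont : Continuous (Lpoly p θ) := by unfold Lpoly; fun_prop
  obtain ⟨s', hs', h0⟩ := intermediate_value_Icc ht hcont.continuousOn ⟨h2.le, hcon⟩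
  have hne : s' ≠ 2 := by rintro rfl; linarith
  have := huniq s' (lt_of_le_of_ne hs'.1 (Ne.symm hne)) h0
  linarith [hs'.2]

/-- Weighted Young inequality in the form used below. -/
lemma young_rpow {P a z : ℝ} (hP : 0 ≤ P) (ha : 0 ≤ a) (ha1 : a ≤ 1) (hz : 0 < z) :
    P ^ a ≤ a * z ^ (1 - a) * P + (1 - a) * z ^ (-a) := by
  have h := Real.geom_mean_le_arith_mean2_weighted ha (by linarith : 0 ≤ 1 - a)
    (mul_nonneg hz.le hP) zero_le_one (by ring)
  rw [Real.one_rpow, mul_one, Real.mul_rpow hz.le hP] at h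
  have h2 := mul_le_mul_of_nonneg_left h (Real.rpow_nonneg hz.le (-a))
  rw [← mul_assoc, ← Real.rpow_add hz, neg_add_cancel, Real.rpow_zero, one_mul] at h2
  have e : z ^ (1 - a) = z ^ (-a) * z := by
    rw [sub_eq_neg_add, Real.rpow_add hz, Real.rpow_one]
  rw [e]; linarith

/-- The pointwise absorption inequality. -/
lemma pointwise {p θ t σ q c1 c2 A : ℝ} (hp : 1 < p) (hpθ : p ≤ θ) (ht : 2 ≤ t)
    (hL : Lpoly p θ t < 0) (hσ : σ = (p + 1) / (θ + 1)) (hq : q = t / σ - 1)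
    (hc1 : c1 = (q + 1) ^ 2 / (4 * q)) (hc2 : c2 = t ^ 2 / (4 * (t - 1)))
    (hA : A = √(σ * p * θ)) :
    ∃ α β A' : ℝ, 0 ≤ α ∧ 0 < β ∧ 0 < A' ∧ A' < A ∧ ∀ T V : ℝ, 0 ≤ T → 0 < V → T ≤ V ^ σ →
      α * (c1 * σ * (V ^ p * T ^ q)) + β * (c2 * (T ^ θ * V ^ (t - 1))) ≤
      A' * (α * (V ^ ((p - 1) / 2) * T ^ ((θ - 1) / 2) * T ^ (q + 1))
        + β * (V ^ ((p - 1) / 2) * T ^ ((θ - 1) / 2) * V ^ t)) := by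
  have hθ1 : 0 < θ + 1 := by linarith
  have hσ0 : 0 < σ := by rw [hσ]; apply div_pos <;> linarith
  have hσ1 : σ ≤ 1 := by rw [hσ, div_le_one hθ1]; linarith
  have hσθ : σ * (θ + 1) = p + 1 := by rw [hσ]; field_simp
  have hq1 : σ * (q + 1) = t := by rw [hq]; field_simp; ring
  have hqpos : 1 ≤ q := by nlinarith
  have hc1p : 0 < c1 := by rw [hc1]; positivity
  have hc2p : 0 < c2 := by rw [hc2]; apply div_pos <;> nlinarith
  have hA2 : A ^ 2 = σ * p * θ := by
    rw [hA, Real.sq_sqrt]; have : 0 < θ := by linarith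
    positivity
  have hApos : 0 < A := by
    rw [hA]; apply Real.sqrt_pos.2; have : 0 < θ := by linarith
    positivity
  have hAp : p ≤ A := by
    have : p ^ 2 ≤ A ^ 2 := by
      rw [hA2]
      have : p ≤ σ * θ := by nlinarith
      nlinarith
    exact (abs_le_of_sq_le_sq' this hApos.le).2
  have hcc : c1 * c2 * σ < A ^ 2 := by
    rw [hA2]
    have h1 : c1 * c2 < p * θ := by
      rw [hc1, hc2, div_mul_div_comm, div_lt_iff₀ (by nlinarith)]
      have h := hL
      unfold Lpoly at h
      have e : t ^ 4 - (16 * p * θ * (p + 1) / (θ + 1)) * t ^ 2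
          + (16 * p * θ * (p + 1) * (p + θ + 2) / (θ + 1) ^ 2) * t
          - 16 * p * θ * (p + 1) ^ 2 / (θ + 1) ^ 2 =
          t ^ 4 - 16 * p * θ * σ * t ^ 2 + 16 * p * θ * σ * (1 + σ) * t 
          - 16 * p * θ * σ ^ 2 := by
        rw [hσ]; field_simp; ring
      rw [e] at h
      have e2 : t ^ 4 - 16 * p * θ * σ * t ^ 2 + 16 * p * θ * σ * (1 + σ) * t 
          - 16 * p * θ * σ ^ 2 = σ ^ 2 * ((q+1)^2 * t^2 - p * θ * (4 * q * (4 * (t - 1)))) := by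
        have e3 : σ * q = t - σ := by linarith
        have : σ ^ 2 * ((q+1)^2 * t^2 - p * θ * (4 * q * (4 * (t - 1)))) = 
           (σ * (q + 1)) ^ 2 * t ^ 2 - 16 * p * θ * σ * (σ * q) * (t - 1) := by ring
        rw [this, hq1, e3]; ring
      rw [e2] at h
      have h5 := neg_of_mul_neg_right h (sq_nonneg σ)
      linarith
    nlinarith
  by_cases hcase : 2 * t < p + 1
  · -- first case
    have hc2A : c2 < A := by
      refine lt_of_lt_of_le ?_ hAp
      rw [hc2, div_lt_iff₀ (by linarith)]
      nlinarith
    refine ⟨0, 1, c2, le_rfl, one_pos, hc2p, hc2A, ?_⟩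
    intro T V hT hV hTV
    simp only [zero_mul, one_mul, zero_add]
    apply mul_le_mul_of_nonneg_left _ hc2p.le
    have h1 : T ^ θ = T ^ ((θ - 1) / 2) * T ^ ((θ + 1) / 2) := by
      rw [← Real.rpow_add_of_nonneg hT (by linarith) (by linarith)]; congr 1; ring
    have h2 : T ^ ((θ + 1) / 2) ≤ V ^ ((p + 1) / 2) := by
      calc T ^ ((θ + 1) / 2) ≤ (V ^ σ) ^ ((θ + 1) / 2) := 
            Real.rpow_le_rpow hT hTV (by linarith)
        _ = _ := by rw [← Real.rpow_mul hV.le]; congr 1; linarith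
    have h3 : V ^ ((p - 1) / 2) * V ^ t = V ^ ((p + 1) / 2) * V ^ (t - 1) := by
      rw [← Real.rpow_add hV, ← Real.rpow_add hV]; congr 1; ring
    calc T ^ θ * V ^ (t - 1) = T ^ ((θ - 1) / 2) * (T ^ ((θ + 1) / 2) * V ^ (t - 1)) := by
          rw [h1]; ring
      _ ≤ T ^ ((θ - 1) / 2) * (V ^ ((p + 1) / 2) * V ^ (t - 1)) := by gcongr
      _ = _ := by rw [← h3]; ring
  · push Not at hcase
    set b := (p + 1) / (2 * t) with hb
    have hb0 : 0 < b := by positivity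
    have hb1 : b ≤ 1 := by rw [hb, div_le_one (by linarith)]; exact hcase
    have hbt : b * t = (p + 1) / 2 := by rw [hb]; field_simp
    have hbq : b * (q + 1) = (θ + 1) / 2 := by
      have : σ * (b * (q + 1)) = σ * ((θ + 1) / 2) := by
        calc σ * (b * (q + 1)) = b * t := by rw [← hq1]; ring
          _ = _ := by rw [hbt]; linarith
      exact mul_left_cancel₀ hσ0.ne' this
    -- choose ζ
    obtain ⟨ζ, hζ1, hζ2⟩ : ∃ ζ, c2 / A < ζ ∧ ζ < A / (c1 * σ) := by
      apply exists_between
      rw [div_lt_div_iff₀ hApos (by positivity)]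
      nlinarith
    have hζ0 : 0 < ζ := lt_trans (by positivity) hζ1
    set z := ζ ^ (1 / b) with hz
    have hz0 : 0 < z := by positivity
    have hzb : z ^ b = ζ := by
      rw [hz, ← Real.rpow_mul hζ0.le]; field_simp; simp
    -- β = c1 σ / c2 * z^(2 b - 1)
    set A' := max (c1 * σ * ζ) (c2 / ζ) with hA'
    have hA'0 : 0 < A' := lt_of_lt_of_le (by positivity) (le_max_left _ _)
    refine ⟨1, c1 * σ / c2 * z ^ (2 * b - 1), A', zero_le_one, by positivity, hA'0, ?_, ?_⟩
    · apply max_lt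
      · rw [lt_div_iff₀ (by positivity)] at hζ2; linarith
      · rw [div_lt_iff₀ hApos] at hζ1; rw [div_lt_iff₀ hζ0]; linarith
    intro T V hT hV hTV
    rcases hT.eq_or_lt with h0 | hT
    · have e1 : T ^ q = 0 := by rw [← h0]; exact Real.zero_rpow (by linarith)
      have e2 : T ^ θ = 0 := by rw [← h0]; exact Real.zero_rpow (by linarith)
      have e3 : T ^ ((θ - 1) / 2) = 0 := by rw [← h0]; exact Real.zero_rpow (by linarith)
      simp [e1, e2, e3]
    set P := T ^ (q + 1) / V ^ t with hPdef
    have hP0 : 0 < P := by positivity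
    set J := V ^ ((p - 1) / 2) * T ^ ((θ - 1) / 2) * V ^ t with hJ
    have hJ0 : 0 < J := by positivity
    have f0 : V ^ ((p - 1) / 2) * T ^ ((θ - 1) / 2) * T ^ (q + 1) = J * P := by
      rw [hJ, hPdef]; field_simp
    have hPx : ∀ x, P ^ x = T ^ ((q + 1) * x) * V ^ (-(t * x)) := by
      intro x
      rw [hPdef, Real.div_rpow (by positivity) (by positivity), ← Real.rpow_mul hT.le, 
        ← Real.rpow_mul hV.le, Real.rpow_neg hV.le]; rfl
    have f1 : V ^ p * T ^ q = J * P ^ (1 - b) := by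
      rw [hPx, hJ]
      calc V ^ p * T ^ q = V ^ ((p-1)/2 + t + -(t * (1 - b))) * T ^ ((θ - 1)/2 + (q+1) * (1 - b)) := by
            congr 2 <;> linarith
        _ = _ := by rw [Real.rpow_add hV, Real.rpow_add hV, Real.rpow_add hT]; ring
    have f2 : T ^ θ * V ^ (t - 1) = J * P ^ b := by
      rw [hPx, hJ]
      calc T ^ θ * V ^ (t - 1) = V ^ ((p-1)/2 + t + -(t * b)) * T ^ ((θ - 1)/2 + (q+1) * b) := by
            rw [mul_comm]
            congr 2 <;> linarith
        _ = _ := by rw [Real.rpow_add hV, Real.rpow_add hV, Real.rpow_add hT]; ring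
    have y1 := young_rpow hP0.le (by linarith : 0 ≤ 1 - b) (by linarith) hz0
    have y2 := young_rpow hP0.le hb0.le hb1 hz0
    rw [sub_sub_cancel, hzb] at y1
    rw [f0, f1, f2]
    set Z := z ^ (2 * b - 1) with hZ
    have hZ0 : 0 < Z := by positivity
    have g1 : z ^ (-(1 - b)) = Z / ζ := by
      rw [← hzb, hZ, ← Real.rpow_sub hz0]; congr 1; ring
    have g2 : z ^ (1 - b) = ζ / Z := by
      rw [← hzb, hZ, ← Real.rpow_sub hz0]; congr 1; ring
    have g3 : z ^ (-b) = 1 / ζ := by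
      rw [Real.rpow_neg hz0.le, hzb, one_div]
    rw [g1] at y1
    rw [g2, g3] at y2
    have hl1 : c1 * σ * ζ ≤ A' := le_max_left _ _
    have hl2 : c2 / ζ ≤ A' := le_max_right _ _
    have key : c1 * σ * P ^ (1 - b) + c1 * σ * Z * P ^ b ≤ A' * (P + c1 * σ / c2 * Z) := by
      calc c1 * σ * P ^ (1 - b) + c1 * σ * Z * P ^ b 
          ≤ c1 * σ * ((1 - b) * ζ * P + b * (Z / ζ)) 
            + c1 * σ * Z * (b * (ζ / Z) * P + (1 - b) * (1 / ζ)) := by gcongr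
        _ = c1 * σ * ζ * P + c2 / ζ * (c1 * σ / c2 * Z) := by field_simp; ring
        _ ≤ A' * P + A' * (c1 * σ / c2 * Z) := by gcongr
        _ = _ := by ring
    calc _ = J * (c1 * σ * P ^ (1 - b) + c1 * σ * Z * P ^ b) := by field_simp
      _ ≤ J * (A' * (P + c1 * σ / c2 * Z)) := by gcongr
      _ = _ := by ring

/-- Normalized solutions. -/
def NS {N : ℕ} (Ω : Set (EE N)) (σ p θ : ℝ) (U V : EE N → ℝ) : Prop :=
  ContDiffOn ℝ 2 U Ω ∧ ContDiffOn ℝ 2 V Ω ∧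
  (∀ x ∈ Ω, 0 < U x) ∧ (∀ x ∈ Ω, 0 < V x) ∧
  (∀ x ∈ Ω, -lap U x = σ * V x ^ p) ∧
  (∀ x ∈ Ω, -lap V x = U x ^ θ)

lemma lap_eq_zero_off {N : ℕ} {ξ : EE N → ℝ} {x : EE N} (hx : x ∉ tsupport ξ) :
    lap ξ x = 0 := by
  unfold lap
  refine Finset.sum_eq_zero fun i _ => ?_
  by_contra h
  exact hx (tsupport_fderiv_apply_subset' ξ _
    (tsupport_fderiv_apply_subset' (fun y => fderiv ℝ ξ y (EuclideanSpace.single i 1)) _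
      (subset_tsupport _ h)))

lemma cutoff (N : ℕ) {a b : ℝ} (ha : 0 < a) (hab : a < b) : ∃ η : EE N → ℝ, ContDiff ℝ 2 η ∧
    HasCompactSupport η ∧ tsupport η ⊆ closedBall 0 b ∧ (∀ x, 0 ≤ η x) ∧
    (∀ x ∈ closedBall (0 : EE N) a, η x = 1) ∧
    ∃ M > 0, (∀ x, |lap η x| ≤ M) ∧ (∀ x, ‖gradient η x‖ ^ 2 ≤ M) ∧ (∀ x, η x ^ 2 ≤ M) := by
  let f : ContDiffBump (0 : EE N) := ⟨a, b, ha, hab⟩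
  have hf : ContDiff ℝ 2 f := f.contDiff
  have hl : Continuous (lap (f : EE N → ℝ)) := by
    rw [← continuousOn_univ]
    exact continuousOn_lap isOpen_univ hf.contDiffOn
  obtain ⟨M1, h1⟩ := hl.bounded_above_of_compact_support
    (f.hasCompactSupport.mono' (by
      intro x hx; by_contra h; exact hx (lap_eq_zero_off h)))
  obtain ⟨M2, h2⟩ := (gradsq_cont (hf.of_le (by norm_num))).bounded_above_of_compact_support
    (gradsq_compact f.hasCompactSupport)
  refine ⟨f, hf, f.hasCompactSupport, by rw [f.tsupport_eq], fun x => f.nonneg,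
    fun x hx => f.one_of_mem_closedBall hx, max 1 (max M1 M2), by positivity, ?_, ?_, ?_⟩
  · intro x; exact (h1 x).trans (by simp)
  · intro x
    have := h2 x
    rw [Real.norm_of_nonneg (by positivity)] at this
    exact this.trans (by simp)
  · intro x
    have : f x ^ 2 ≤ 1 := pow_le_one₀ f.nonneg f.le_one
    exact this.trans (by simp)

lemma compare {N : ℕ} (hN : 0 < N) {σ p θ : ℝ} (hσ0 : 0 < σ) (hσ1 : σ ≤ 1) (hθ : 0 < θ)
    (hpσ : σ * (θ + 1) = p + 1) :
    ∃ K : ℝ, 0 < K ∧ ∀ (Ω : Set (EE N)), IsOpen Ω → closedBall 0 1 ⊆ Ω → ∀ U V : EE N → ℝ,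
    NS Ω σ p θ U V → ∀ x ∈ closedBall (0 : EE N) (1 / 2),
      U x - V x ^ σ ≤ K * ∫ z in closedBall (0 : EE N) (3 / 4), U z := by
  obtain ⟨K, hK, h⟩ := mv1 hN
  refine ⟨K, hK, ?_⟩
  rintro Ω hΩ hB U V ⟨hU, hV, hU0, hV0, eU, eV⟩ x hx
  have hVσ : ContDiffOn ℝ 2 (fun x => V x ^ σ) Ω :=
    hV.rpow_const_of_ne (fun x hx => (hV0 x hx).ne')
  have hw : ContDiffOn ℝ 2 (fun x => U x - V x ^ σ) Ω := hU.sub hVσ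
  apply le_of_forall_pos_le_add
  intro δ hδ
  have hfnn : ∀ x, 0 ≤ gtr δ (U x - V x ^ σ) := fun x => gtr_nonneg hδ _
  have hfc : ContDiffOn ℝ 2 (fun x => gtr δ (U x - V x ^ σ)) Ω :=
    (gtr_contDiff δ).comp_contDiffOn hw
  have hm := h Ω hΩ hB (fun x => gtr δ (U x - V x ^ σ)) hfc ?_ (fun x _ => hfnn x) x hx
  · have h1 := le_gtr hδ (U x - V x ^ σ)
    have hsub : closedBall (0 : EE N) (3 / 4) ⊆ Ω :=
      (closedBall_subset_closedBall (by norm_num)).trans hB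
    have h2 : ∫ z in closedBall (0 : EE N) (3 / 4), gtr δ (U z - V z ^ σ) ≤
        ∫ z in closedBall (0 : EE N) (3 / 4), U z := by
      apply setIntegral_mono_on
      · exact (hfc.continuousOn.mono hsub).integrableOn_compact (isCompact_closedBall _ _)
      · exact (hU.continuousOn.mono hsub).integrableOn_compact (isCompact_closedBall _ _)
      · exact measurableSet_closedBall
      · intro z hz
        refine (gtr_le hδ _).trans (max_le ?_ (hU0 z (hsub hz)).le)
        have := Real.rpow_nonneg (hV0 z (hsub hz)).le σ
        linarith
    have := mul_le_mul_of_nonneg_left h2 hK.le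
    linarith
  · intro z hz
    have e := lap_comp hΩ hw (S := univ) (h := gtr δ) (fun _ _ => mem_univ _)
      (fun t _ => gtr_hasDerivAt δ t) (fun t _ => gtr_hasDerivAt2 δ t) hz
    rw [e]
    have hd1 : 0 ≤ deriv smoothTransition ((U z - V z ^ σ) / δ) / δ :=
      div_nonneg (deriv_st_nonneg _) hδ.le
    apply add_nonneg (mul_nonneg hd1 (by positivity))
    rcases le_total (U z - V z ^ σ) 0 with hneg | hpos
    · rw [Real.smoothTransition.zero_of_nonpos (div_nonpos_of_nonpos_of_nonneg hneg hδ.le),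
        zero_mul]
    · apply mul_nonneg (Real.smoothTransition.nonneg _)
      rw [lap_sub hΩ hU hVσ hz]
      have e2 := lap_comp hΩ hV (S := Ioi 0) (h := fun t => t ^ σ)
        (h1 := fun t => σ * t ^ (σ - 1)) (h2 := fun t => σ * ((σ - 1) * t ^ (σ - 1 - 1)))
        (fun x hx => hV0 x hx)
        (fun t ht => Real.hasDerivAt_rpow_const (Or.inl (ne_of_gt ht)))
        (fun t ht => (Real.hasDerivAt_rpow_const (Or.inl (ne_of_gt ht))).const_mul σ) hz
      have hVz := hV0 z hz
      rw [e2, show lap U z = -(σ * V z ^ p) by rw [← eU z hz]; ring,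
        show lap V z = -(U z ^ θ) by rw [← eV z hz]; ring]
      have e3 : V z ^ p = V z ^ (σ - 1) * (V z ^ σ) ^ θ := by
        rw [← Real.rpow_mul hVz.le, ← Real.rpow_add hVz]; congr 1; linarith
      have e4 : (V z ^ σ) ^ θ ≤ U z ^ θ :=
        Real.rpow_le_rpow (by positivity) (by linarith) hθ.le
      have e5 : 0 ≤ σ * ((1 - σ) * V z ^ (σ - 1 - 1)) * ‖gradient V z‖ ^ 2 := by
        have : 0 ≤ 1 - σ := by linarith
        positivity
      have e6 := mul_le_mul_of_nonneg_left e4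
        (by positivity : 0 ≤ σ * V z ^ (σ - 1))
      rw [e3]
      nlinarith

lemma U_theta {N : ℕ} {σ p θ : ℝ} :
    ∃ C : ℝ, 0 < C ∧ ∀ (Ω : Set (EE N)), IsOpen Ω → closedBall 0 1 ⊆ Ω → ∀ U V : EE N → ℝ,
    NS Ω σ p θ U V → 
      ∫ z in closedBall (0 : EE N) (3 / 4), U z ^ θ ≤ C * ∫ z in closedBall (0 : EE N) (7 / 8), V z := by
  obtain ⟨η, hη, hc, hs, h0, h1, M, hM, hM1, -, -⟩ := 
    cutoff N (a := 3/4) (b := 7/8) (by norm_num) (by norm_num)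
  refine ⟨M, hM, ?_⟩
  rintro Ω hΩ hB U V ⟨hU, hV, hU0, hV0, eU, eV⟩
  have hsΩ' : closedBall (0:EE N) (7/8) ⊆ Ω := (closedBall_subset_closedBall (by norm_num)).trans hB
  have hsΩ : tsupport η ⊆ Ω := hs.trans hsΩ'
  have hUθ : ContinuousOn (fun x => U x ^ θ) Ω :=
    hU.continuousOn.rpow_const (fun x hx => Or.inl (hU0 x hx).ne')
  have hIntg : Integrable (fun x => U x ^ θ * η x) :=
    integrable_mul_cutoff hΩ hUθ hη.continuous hc hsΩ
  have hη0 : ∀ x, x ∉ tsupport η → η x = 0 := fun x hx => image_eq_zero_of_notMem_tsupport hx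
  calc ∫ z in closedBall (0 : EE N) (3 / 4), U z ^ θ 
      = ∫ z in closedBall (0 : EE N) (3 / 4), U z ^ θ * η z := by
        apply setIntegral_congr_fun measurableSet_closedBall
        intro z hz; simp only [h1 z hz, mul_one]
    _ ≤ ∫ z, U z ^ θ * η z := by
        apply setIntegral_le_integral hIntg
        filter_upwards with x
        by_cases hx : x ∈ tsupport η
        · exact mul_nonneg (Real.rpow_nonneg (hU0 x (hsΩ hx)).le _) (h0 x)
        · simp [hη0 x hx]
    _ = ∫ z, (-lap V z) * η z := by
        congr 1; funext x
        by_cases hx : x ∈ tsupport η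
        · rw [eV x (hsΩ hx)]
        · simp [hη0 x hx]
    _ = ∫ z, V z * (- lap η z) := green2 hΩ hV hη hc hsΩ
    _ = ∫ z in closedBall (0 : EE N) (7 / 8), V z * (- lap η z) := by
        symm
        apply setIntegral_eq_integral_of_forall_compl_eq_zero
        intro x hx
        rw [lap_eq_zero_off (fun hh => hx (hs hh))]; simp
    _ ≤ ∫ z in closedBall (0 : EE N) (7 / 8), M * V z := by
        have hVc := hV.continuousOn.mono hsΩ'
        have hlc : ContinuousOn (lap η) (closedBall (0:EE N) (7/8)) :=
          (continuousOn_lap isOpen_univ hη.contDiffOn).mono (subset_univ _)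
        apply setIntegral_mono_on
        · exact (hVc.mul hlc.neg).integrableOn_compact (isCompact_closedBall _ _)
        · exact (continuousOn_const.mul hVc).integrableOn_compact (isCompact_closedBall _ _)
        · exact measurableSet_closedBall
        · intro z hz
          have := (abs_le.1 (hM1 z)).1
          nlinarith [hV0 z (hsΩ' hz)]
    _ = _ := by rw [integral_const_mul]

lemma V_int_pos {N : ℕ} {Ω : Set (EE N)} {V : EE N → ℝ} (hV : ContinuousOn V Ω)
    (hV0 : ∀ x ∈ Ω, 0 < V x) {r : ℝ} (hr : 0 < r) (hB : closedBall 0 r ⊆ Ω) :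
    0 < ∫ z in closedBall (0 : EE N) r, V z := by
  rw [setIntegral_pos_iff_support_of_nonneg_ae]
  · have : closedBall (0 : EE N) r ⊆ Function.support V ∩ closedBall 0 r :=
      fun x hx => ⟨(hV0 x (hB hx)).ne', hx⟩
    exact lt_of_lt_of_le (measure_closedBall_pos _ _ hr) (measure_mono this)
  · filter_upwards [ae_restrict_mem measurableSet_closedBall] with x hx using (hV0 x (hB hx)).le
  · exact (hV.mono hB).integrableOn_compact (isCompact_closedBall _ _)

lemma exists_k {N : ℕ} (hN : 0 < N) {σ p θ : ℝ} (hσ0 : 0 < σ) (hσ1 : σ ≤ 1) (hθ : 1 ≤ θ)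
    (hpσ : σ * (θ + 1) = p + 1) :
    ∃ C : ℝ, 0 < C ∧ ∀ (Ω : Set (EE N)), IsOpen Ω → closedBall 0 1 ⊆ Ω → ∀ U V : EE N → ℝ,
    NS Ω σ p θ U V → ∃ k > 0, (∀ x ∈ closedBall (0 : EE N) (1 / 2), U x - V x ^ σ ≤ k) ∧ 
      k ^ θ ≤ C * ∫ z in closedBall (0 : EE N) (7 / 8), V z := by
  obtain ⟨K, hK, h1⟩ := compare hN hσ0 hσ1 (by linarith : 0 < θ) hpσ
  obtain ⟨M, hM, h2⟩ := U_theta (N := N) (σ := σ) (p := p) (θ := θ)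
  set vv := volume.real (closedBall (0:EE N) (3/4)) + 1 with hvv
  have hvv0 : 0 < vv := by positivity
  refine ⟨K ^ θ * (vv ^ θ * M), by positivity, ?_⟩
  intro Ω hΩ hB U V hns
  obtain ⟨hU, hV, hU0, hV0, eU, eV⟩ := hns
  have hsub : closedBall (0 : EE N) (3 / 4) ⊆ Ω :=
      (closedBall_subset_closedBall (by norm_num)).trans hB
  have hI := V_int_pos hV.continuousOn hV0 (by norm_num : (0:ℝ) < 7/8) 
    ((closedBall_subset_closedBall (by norm_num)).trans hB)
  set I := ∫ z in closedBall (0 : EE N) (7 / 8), V z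
  have hIU := V_int_pos hU.continuousOn hU0 (by norm_num : (0:ℝ) < 3/4) hsub
  have h3 := h2 Ω hΩ hB U V ⟨hU, hV, hU0, hV0, eU, eV⟩
  have h4 := jensen (isCompact_closedBall (0:EE N) (3/4)) θ hθ (hU.continuousOn.mono hsub)
    (fun x hx => (hU0 x (hsub hx)).le)
  refine ⟨(K ^ θ * (vv ^ θ * M) * I) ^ (1 / θ), by positivity, ?_, ?_⟩
  · intro x hx
    refine (h1 Ω hΩ hB U V ⟨hU, hV, hU0, hV0, eU, eV⟩ x hx).trans ?_
    rw [← Real.rpow_le_rpow_iff (by positivity) (by positivity) (by linarith : 0 < θ),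
      ← Real.rpow_mul (by positivity) (1/θ), one_div_mul_cancel (by linarith), Real.rpow_one,
      Real.mul_rpow hK.le hIU.le]
    have h5 := mul_le_mul_of_nonneg_left h3 (by positivity : 0 ≤ vv ^ θ)
    have h6 := mul_le_mul_of_nonneg_left (h4.trans h5) (by positivity : 0 ≤ K ^ θ)
    linarith
  · rw [← Real.rpow_mul (by positivity) (1/θ), one_div_mul_cancel (by linarith), Real.rpow_one]

lemma cut_mono {N : ℕ} {Ω : Set (EE N)} (hΩ : IsOpen Ω) {f g ξ : EE N → ℝ}
    (hf : ContinuousOn f Ω) (hg : ContinuousOn g Ω) (hξ : Continuous ξ)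
    (hc : HasCompactSupport ξ) (hs : tsupport ξ ⊆ Ω) (hξ0 : ∀ x, 0 ≤ ξ x)
    (hfg : ∀ x ∈ tsupport ξ, f x ≤ g x) :
    ∫ x, f x * ξ x ≤ ∫ x, g x * ξ x := by
  apply integral_mono (integrable_mul_cutoff hΩ hf hξ hc hs)
    (integrable_mul_cutoff hΩ hg hξ hc hs)
  intro x
  by_cases hx : x ∈ tsupport ξ
  · exact mul_le_mul_of_nonneg_right (hfg x hx) (hξ0 x)
  · simp [image_eq_zero_of_notMem_tsupport hx]

lemma cut_le {N : ℕ} {Ω : Set (EE N)} (hΩ : IsOpen Ω) {f g ξ : EE N → ℝ} {M : ℝ}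
    (hf : ContinuousOn f Ω) (hg : ContinuousOn g Ω) (hξ : Continuous ξ)
    (hc : HasCompactSupport ξ) (hs : tsupport ξ ⊆ closedBall 0 (1 / 2))
    (hB : closedBall 0 1 ⊆ Ω) (hξ0 : ∀ x, 0 ≤ ξ x) (hM : ∀ x, ξ x ≤ M)
    (hfg : ∀ x ∈ closedBall (0 : EE N) (1 / 2), f x ≤ g x) (hg0 : ∀ x ∈ Ω, 0 ≤ g x) :
    ∫ x, f x * ξ x ≤ M * ∫ x in closedBall (0 : EE N) (7 / 8), g x := by
  have h1 : closedBall (0 : EE N) (1 / 2) ⊆ closedBall 0 (7 / 8) :=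
    closedBall_subset_closedBall (by norm_num)
  have h2 : closedBall (0 : EE N) (7 / 8) ⊆ Ω :=
    (closedBall_subset_closedBall (by norm_num)).trans hB
  have hsΩ := hs.trans (h1.trans h2)
  refine (cut_mono hΩ hf hg hξ hc hsΩ hξ0 (fun x hx => hfg x (hs hx))).trans ?_
  rw [← integral_const_mul]
  rw [← setIntegral_eq_integral_of_forall_compl_eq_zero (s := closedBall (0 : EE N) (7 / 8))]
  · apply setIntegral_mono_on
    · exact (integrable_mul_cutoff hΩ hg hξ hc hsΩ).integrableOn
    · exact (continuousOn_const.mul (hg.mono h2)).integrableOn_compact (isCompact_closedBall _ _)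
    · exact measurableSet_closedBall
    · intro x hx
      rw [mul_comm]
      exact mul_le_mul_of_nonneg_right (hM x) (hg0 x (h2 hx))
  · intro x hx
    rw [image_eq_zero_of_notMem_tsupport (fun hh => hx (h1 (hs hh))), mul_zero]

lemma energyV {N : ℕ} {Ω : Set (EE N)} (hΩ : IsOpen Ω) {f η : EE N → ℝ}
    (hf : ContDiffOn ℝ 2 f Ω) (hf0 : ∀ x ∈ Ω, 0 < f x) {t δ : ℝ} (ht : 2 ≤ t) (hδ : 0 < δ)
    (hη : ContDiff ℝ 1 η) (hc : HasCompactSupport η) (hs : tsupport η ⊆ Ω) :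
    ∫ x, ‖gradient (fun y => f y ^ (t / 2) * η y) x‖ ^ 2 ≤
      (1 + δ) * (t ^ 2 / (4 * (t - 1))) * (∫ x, ((- lap f x) * f x ^ (t - 1)) * η x ^ 2)
      + (1 + (1 - (1 + δ) * (2 * (t ^ 2 / (4 * (t - 1))) / t)) ^ 2 / δ)
        * ∫ x, f x ^ t * ‖gradient η x‖ ^ 2 := by
  set c2 := t ^ 2 / (4 * (t - 1)) with hc2
  have ht1 : 0 < t - 1 := by linarith
  have hcd : ∀ r : ℝ, ContDiffOn ℝ 1 (fun x => f x ^ r) Ω := fun r =>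
    (hf.of_le (by norm_num)).rpow_const_of_ne (fun x hx => (hf0 x hx).ne')
  have := energy hΩ hf (G := fun τ => τ ^ (t / 2)) (G1 := fun τ => t / 2 * τ ^ (t / 2 - 1))
    (H := fun τ => c2 * τ ^ (t - 1)) (H1 := fun τ => c2 * ((t - 1) * τ ^ (t - 1 - 1)))
    (h := 2 * c2 / t) hδ
    (fun x hx => Real.hasDerivAt_rpow_const (Or.inl (hf0 x hx).ne'))
    (fun x hx => (Real.hasDerivAt_rpow_const (Or.inl (hf0 x hx).ne')).const_mul c2)
    (hcd _) (contDiffOn_const.mul (hcd _))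
    (fun x hx => by
      have hx0 := hf0 x hx
      rw [mul_pow, ← Real.rpow_natCast (f x ^ (t / 2 - 1)), ← Real.rpow_mul hx0.le]
      apply le_of_eq
      rw [show (t / 2 - 1) * ((2:ℕ):ℝ) = t - 1 - 1 by push_cast; ring, ← mul_assoc, hc2]
      congr 1; field_simp; norm_num)
    (fun x hx => by
      have hx0 := hf0 x hx
      rw [mul_left_comm (f x ^ (t / 2)), ← Real.rpow_add hx0, ← mul_assoc,
        show t / 2 + (t / 2 - 1) = t - 1 by ring]
      congr 1; field_simp)
    hη hc hs
  have e1 : ∫ x, (- lap f x) * (c2 * f x ^ (t - 1) * η x ^ 2) =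
      c2 * ∫ x, ((- lap f x) * f x ^ (t - 1)) * η x ^ 2 := by
    rw [← integral_const_mul]; congr 1; funext x; ring
  have e2 : ∫ x, (f x ^ (t / 2)) ^ 2 * ‖gradient η x‖ ^ 2 =
      ∫ x, f x ^ t * ‖gradient η x‖ ^ 2 := by
    congr 1; funext x
    by_cases hx : x ∈ tsupport η
    · rw [← Real.rpow_natCast (f x ^ (t / 2)), ← Real.rpow_mul (hf0 x (hs hx)).le]
      congr 2; push_cast; ring
    · rw [gradient_eq_zero_off hx]; simp
  rw [e1, e2] at this
  linarith

lemma energyU {N : ℕ} {Ω : Set (EE N)} (hΩ : IsOpen Ω) {f η : EE N → ℝ}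
    (hf : ContDiffOn ℝ 2 f Ω) (hlap : ∀ x ∈ Ω, 0 ≤ - lap f x) {q δ k : ℝ} (hq : 1 ≤ q)
    (hδ : 0 < δ) (hk : 0 < k)
    (hη : ContDiff ℝ 1 η) (hc : HasCompactSupport η) (hs : tsupport η ⊆ Ω) :
    ∫ x, ‖gradient (fun y => gtr k (f y - k) ^ ((q + 1) / 2) * η y) x‖ ^ 2 ≤
      (1 + δ) * ((q + 1) ^ 2 / (4 * q)) *
        (∫ x, ((- lap f x) * gtr k (f x - k) ^ q) * η x ^ 2)
      + (1 + (1 - (1 + δ) * (2 * ((q + 1) ^ 2 / (4 * q)) / (q + 1))) ^ 2 / δ)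
        * ∫ x, gtr k (f x - k) ^ (q + 1) * ‖gradient η x‖ ^ 2 := by
  set c1 := (q + 1) ^ 2 / (4 * q) with hc1
  have hq0 : 0 < q := by linarith
  have hc10 : 0 < c1 := by positivity
  have htr0 : ∀ τ, 0 ≤ gtr k (τ - k) := fun τ => gtr_nonneg hk _
  have hd1 : ∀ τ, HasDerivAt (fun τ => gtr k (τ - k)) (smoothTransition ((τ - k) / k)) τ := by
    intro τ
    exact HasDerivAt.comp_sub_const τ k (gtr_hasDerivAt k (τ - k))
  have hd2 : ∀ τ, HasDerivAt (fun τ => smoothTransition ((τ - k) / k))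
      (deriv smoothTransition ((τ - k) / k) / k) τ := by
    intro τ
    exact HasDerivAt.comp_sub_const τ k (gtr_hasDerivAt2 k (τ - k))
  have hcd : ∀ r : ℝ, 1 ≤ r → ContDiff ℝ 1 (fun τ => gtr k (τ - k) ^ r) := fun r hr =>
    ContDiff.rpow_const_of_le (m := 1)
      (((gtr_contDiff k).of_le (by norm_num)).comp (contDiff_id.sub contDiff_const)) (by simpa using hr)
  have hst : ContDiff ℝ 1 (fun τ : ℝ => smoothTransition ((τ - k) / k)) :=
    Real.smoothTransition.contDiff.comp ((contDiff_id.sub contDiff_const).div_const k)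
  have hf1 : ContDiffOn ℝ 1 f Ω := hf.of_le (by norm_num)
  have := energy hΩ hf (G := fun τ => gtr k (τ - k) ^ ((q + 1) / 2))
    (G1 := fun τ => smoothTransition ((τ - k) / k) * ((q + 1) / 2) *
      gtr k (τ - k) ^ ((q + 1) / 2 - 1))
    (H := fun τ => c1 * (gtr k (τ - k) ^ q * smoothTransition ((τ - k) / k)))
    (H1 := fun τ => c1 * ((smoothTransition ((τ - k) / k) * q * gtr k (τ - k) ^ (q - 1)) *
      smoothTransition ((τ - k) / k) + gtr k (τ - k) ^ q *
        (deriv smoothTransition ((τ - k) / k) / k)))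
    (h := 2 * c1 / (q + 1)) hδ
    (fun x hx => (hd1 (f x)).rpow_const (Or.inr (by linarith)))
    (fun x hx => (((hd1 (f x)).rpow_const (Or.inr (by linarith))).mul (hd2 (f x))).const_mul c1)
    ((hcd _ (by linarith)).comp_contDiffOn hf1)
    (contDiffOn_const.mul (((hcd _ hq).comp_contDiffOn hf1).mul (hst.comp_contDiffOn hf1)))
    (fun x hx => by
      have hx0 := htr0 (f x)
      set a := gtr k (f x - k)
      set b := smoothTransition ((f x - k) / k)
      have h3 : 0 ≤ a ^ q * (deriv smoothTransition ((f x - k) / k) / k) :=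
        mul_nonneg (by positivity) (div_nonneg (deriv_st_nonneg _) hk.le)
      have h4 : (a ^ ((q + 1) / 2 - 1)) ^ 2 = a ^ (q - 1) := by
        rw [← Real.rpow_natCast, ← Real.rpow_mul hx0]; congr 1; push_cast; ring
      have h5 : c1 * q = ((q + 1) / 2) ^ 2 := by rw [hc1]; field_simp; norm_num
      have h6 := mul_nonneg hc10.le h3
      calc (b * ((q + 1) / 2) * a ^ ((q + 1) / 2 - 1)) ^ 2
          = b ^ 2 * ((q + 1) / 2) ^ 2 * a ^ (q - 1) := by rw [mul_pow, mul_pow, h4]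
        _ = c1 * (b * q * a ^ (q - 1) * b) := by rw [← h5]; ring
        _ ≤ _ := by linarith)
    (fun x hx => by
      have hx0 := htr0 (f x)
      have h4 : gtr k (f x - k) ^ q = gtr k (f x - k) ^ ((q + 1) / 2) *
          gtr k (f x - k) ^ ((q + 1) / 2 - 1) := by
        rw [← Real.rpow_add_of_nonneg hx0 (by linarith) (by linarith)]; congr 1; ring
      rw [h4]; field_simp)
    hη hc hs
  have hη2 : Continuous (fun x => η x ^ 2) := hη.continuous.pow 2
  have hcf : ∀ r : ℝ, 1 ≤ r → ContinuousOn (fun x => gtr k (f x - k) ^ r) Ω := fun r hr =>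
    ((hcd r hr).comp_contDiffOn hf1).continuousOn
  have e1 : ∫ x, (- lap f x) * (c1 * (gtr k (f x - k) ^ q * smoothTransition ((f x - k) / k))
       * η x ^ 2) ≤ c1 * ∫ x, ((- lap f x) * gtr k (f x - k) ^ q) * η x ^ 2 := by
    rw [← integral_const_mul]
    have e : ∀ x, (- lap f x) * (c1 * (gtr k (f x - k) ^ q * smoothTransition ((f x - k) / k))
       * η x ^ 2) = ((- lap f x) * (c1 * (gtr k (f x - k) ^ q *
        smoothTransition ((f x - k) / k)))) * η x ^ 2 := fun x => by ring
    have e' : ∀ x, c1 * ((- lap f x) * gtr k (f x - k) ^ q * η x ^ 2) =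
      (c1 * ((- lap f x) * gtr k (f x - k) ^ q)) * η x ^ 2 := fun x => by ring
    simp only [e, e']
    apply cut_mono hΩ _ _ hη2 (sq_compact hc) ((sq_tsupport η).trans hs)
      (fun x => sq_nonneg _)
    · intro x hx
      have hl := hlap x (hs (sq_tsupport η hx))
      have h1 := Real.smoothTransition.le_one ((f x - k) / k)
      have h2 : 0 ≤ c1 * ((- lap f x) * gtr k (f x - k) ^ q) :=
        mul_nonneg hc10.le (mul_nonneg hl (Real.rpow_nonneg (htr0 _) _))
      nlinarith
    · exact (continuousOn_lap hΩ hf).neg.mul (continuousOn_const.mul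
        ((hcf q hq).mul (hst.comp_contDiffOn hf1).continuousOn))
    · exact continuousOn_const.mul ((continuousOn_lap hΩ hf).neg.mul (hcf q hq))
  have e2 : ∫ x, (gtr k (f x - k) ^ ((q + 1) / 2)) ^ 2 * ‖gradient η x‖ ^ 2 =
      ∫ x, gtr k (f x - k) ^ (q + 1) * ‖gradient η x‖ ^ 2 := by
    congr 1; funext x
    rw [← Real.rpow_natCast (gtr k (f x - k) ^ ((q + 1) / 2)), ← Real.rpow_mul (htr0 _)]
    congr 2; push_cast; ring
  rw [e2] at this
  have := mul_le_mul_of_nonneg_left e1 (by linarith : 0 ≤ 1 + δ)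
  linarith

lemma pow_split {θ δ : ℝ} (hθ : 1 ≤ θ) (hδ : 0 < δ) : ∃ C > 0, ∀ T k U : ℝ, 0 ≤ T → 0 < k →
    0 ≤ U → U ≤ T + 2 * k → U ^ θ ≤ (1 + δ) * T ^ θ + C * k ^ θ := by
  have hθ0 : 0 < θ := by linarith
  set ε := (1 + δ) ^ (1 / θ) - 1 with hε
  have hε0 : 0 < ε := by
    have := Real.one_lt_rpow (by linarith : 1 < 1 + δ) (by positivity : 0 < 1 / θ)
    linarith
  have hεθ : (1 + ε) ^ θ = 1 + δ := by
    rw [hε, add_sub_cancel, ← Real.rpow_mul (by linarith), one_div_mul_cancel hθ0.ne',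
      Real.rpow_one]
  refine ⟨(2 / ε + 2) ^ θ, by positivity, ?_⟩
  intro T k U hT hk hU0 hU
  by_cases h : 2 * k ≤ ε * T
  · have h1 : U ^ θ ≤ ((1 + ε) * T) ^ θ := Real.rpow_le_rpow hU0 (by linarith) hθ0.le
    rw [Real.mul_rpow (by linarith) hT, hεθ] at h1
    have : 0 ≤ (2 / ε + 2) ^ θ * k ^ θ := by positivity
    linarith
  · push Not at h
    have h2 : T ≤ 2 / ε * k := by
      rw [div_mul_eq_mul_div, le_div_iff₀ hε0]; linarith
    have h1 : U ^ θ ≤ ((2 / ε + 2) * k) ^ θ := Real.rpow_le_rpow hU0 (by linarith) hθ0.le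
    rw [Real.mul_rpow (by positivity) hk.le] at h1
    have : 0 ≤ (1 + δ) * T ^ θ := by positivity
    linarith

lemma rpow_half_sq {a : ℝ} (ha : 0 ≤ a) (r : ℝ) : (a ^ (r / 2)) ^ 2 = a ^ r := by
  rw [← Real.rpow_natCast, ← Real.rpow_mul ha]; congr 1; push_cast; ring

lemma absorb {α β A A' δ Q1 Q2 X1 X2 Y1 Y2 e1 e2 K1 K2 D : ℝ} (hα : 0 ≤ α) (hβ : 0 < β)
    (hA' : 0 < A') (hA : A' < A) (hδ : 0 < δ) (hδA : (1 + δ) ^ 2 * A' < A)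
    (hX1 : 0 ≤ Q1 * X1) (he1 : 0 ≤ e1)
    (E1 : e1 ≤ (1 + δ) * (Q1 * X1) + K1 * D) (E2 : e2 ≤ (1 + δ) ^ 2 * (Q2 * X2) + K2 * D)
    (S1 : A * Y1 ≤ e1) (S2 : A * Y2 ≤ e2)
    (PW : α * (Q1 * X1) + β * (Q2 * X2) ≤ A' * (α * Y1 + β * Y2)) :
    e2 ≤ ((α * K1 + β * K2) * A / (A - (1 + δ) ^ 2 * A') / β) * D := by
  set d := A - (1 + δ) ^ 2 * A' with hd
  have hd0 : 0 < d := by linarith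
  set S := α * e1 + β * e2 with hS
  have hA0 : 0 < A := by linarith
  have E1' : e1 ≤ (1 + δ) ^ 2 * (Q1 * X1) + K1 * D := by
    have := mul_nonneg hX1 (by positivity : 0 ≤ δ + δ ^ 2)
    nlinarith
  have a1 := mul_le_mul_of_nonneg_left E1' hα
  have a2 := mul_le_mul_of_nonneg_left E2 hβ.le
  have a3 : S ≤ (1 + δ) ^ 2 * (α * (Q1 * X1) + β * (Q2 * X2)) + (α * K1 + β * K2) * D := by
    rw [hS]; linarith
  have a4 := mul_le_mul_of_nonneg_left PW (by positivity : 0 ≤ (1 + δ) ^ 2)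
  have a5 : A * (α * Y1 + β * Y2) ≤ S := by
    have b1 := mul_le_mul_of_nonneg_left S1 hα
    have b2 := mul_le_mul_of_nonneg_left S2 hβ.le
    rw [hS]; linarith
  have a6 := mul_le_mul_of_nonneg_left a5 (by positivity : 0 ≤ (1 + δ) ^ 2 * A')
  have a7 := mul_le_mul_of_nonneg_left (a3.trans (add_le_add_left a4 _)) hA0.le
  have a8 : d * S ≤ A * ((α * K1 + β * K2) * D) := by rw [hd]; linarith
  have a9 : β * e2 ≤ S := by
    have := mul_nonneg hα he1
    rw [hS]; linarith
  rw [div_div, div_mul_eq_mul_div, le_div_iff₀ (by positivity)]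
  have := mul_le_mul_of_nonneg_left a9 hd0.le
  linarith

lemma exists_delta {A A' : ℝ} (hA' : 0 < A') (hA : A' < A) :
    ∃ δ > 0, (1 + δ) ^ 2 * A' < A := by
  have h1 : 0 < (A - A') / (4 * A') := div_pos (by linarith) (by linarith)
  refine ⟨min 1 ((A - A') / (4 * A')), by positivity, ?_⟩
  set δ := min 1 ((A - A') / (4 * A'))
  have h0 : 0 < δ := by positivity
  have h2 : δ ≤ 1 := min_le_left _ _
  have h3 : δ ≤ (A - A') / (4 * A') := min_le_right _ _
  rw [le_div_iff₀ (by positivity)] at h3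
  nlinarith [mul_pos h0 hA']

lemma k_bound {N : ℕ} {V : EE N → ℝ} {B : Set (EE N)} (hB : IsCompact B) (hV : ContinuousOn V B)
    (hV0 : ∀ x ∈ B, 0 < V x) {t : ℝ} (ht : 2 ≤ t) :
    (∫ x in B, V x) * (∫ x in B, V x ^ (t - 1)) ≤
      (volume.real B * (volume.real B + 1) ^ t + 1) * ∫ x in B, V x ^ t := by
  have hI : 0 ≤ ∫ x in B, V x := setIntegral_nonneg hB.measurableSet fun x hx => (hV0 x hx).le
  have hJ := jensen hB t (by linarith) hV (fun x hx => (hV0 x hx).le)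
  set I := ∫ x in B, V x
  have hc : ∀ r : ℝ, IntegrableOn (fun x => V x ^ r) B := fun r =>
    (hV.rpow_const (fun x hx => Or.inl (hV0 x hx).ne')).integrableOn_compact hB
  rw [← integral_const_mul]
  calc ∫ x in B, I * V x ^ (t - 1) ≤ ∫ x in B, (I ^ t + V x ^ t) := by
        apply setIntegral_mono_on ((hc _).const_mul _) _ hB.measurableSet
        · intro x hx
          have hx0 := hV0 x hx
          have e : ∀ a : ℝ, 0 < a → a * a ^ (t - 1) = a ^ t := fun a ha => by
            rw [Real.rpow_sub_one ha.ne']; field_simp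
          rcases le_total I (V x) with h | h
          · have : I * V x ^ (t - 1) ≤ V x * V x ^ (t - 1) := by gcongr
            rw [e _ hx0] at this
            have : 0 ≤ I ^ t := by positivity
            linarith
          · have : I * V x ^ (t - 1) ≤ I * I ^ (t - 1) := by
              apply mul_le_mul_of_nonneg_left _ hI
              exact Real.rpow_le_rpow hx0.le h (by linarith)
            rw [e _ (lt_of_lt_of_le hx0 h)] at this
            have : 0 ≤ V x ^ t := by positivity
            linarith
        · exact (integrableOn_const hB.measure_ne_top).add (hc t)
    _ = volume.real B * I ^ t + ∫ x in B, V x ^ t := by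
        have i0 : IntegrableOn (fun _ : EE N => I ^ t) B := integrableOn_const hB.measure_ne_top
        rw [integral_add i0 (hc t), setIntegral_const, smul_eq_mul]
    _ ≤ _ := by
        have := mul_le_mul_of_nonneg_left hJ (by positivity : 0 ≤ volume.real B)
        linarith

theorem step_unit {N : ℕ} (hN : 3 ≤ N) {p θ t σ : ℝ} (hp : 1 < p) (hpθ : p ≤ θ) (ht : 2 ≤ t)
    (hL : Lpoly p θ t < 0) (hσ : σ = (p + 1) / (θ + 1)) :
    ∃ C : ℝ, 0 < C ∧ ∀ (Ω : Set (EE N)), IsOpen Ω → closedBall 0 1 ⊆ Ω → ∀ U V : EE N → ℝ,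
    NS Ω σ p θ U V →
    (∀ φ : EE N → ℝ, IsTestFun Ω φ →
      √(σ * p * θ) * ∫ x in Ω, V x ^ ((p - 1) / 2) * U x ^ ((θ - 1) / 2) * φ x ^ 2 ≤
        ∫ x in Ω, ‖gradient φ x‖ ^ 2) →
    (∫ x in closedBall (0 : EE N) (1 / 4), V x ^ ((N : ℝ) / (N - 2) * t)) ^ (((N : ℝ) - 2) / N) ≤
      C * ∫ x in closedBall (0 : EE N) (7 / 8), V x ^ t := by
  have hθ1 : 0 < θ + 1 := by linarith
  have hθ0 : 0 < θ := by linarith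
  have hσ0 : 0 < σ := by rw [hσ]; apply div_pos <;> linarith
  have hσ1 : σ ≤ 1 := by rw [hσ, div_le_one hθ1]; linarith
  have hσθ : σ * (θ + 1) = p + 1 := by rw [hσ]; field_simp
  obtain ⟨q, hq⟩ : ∃ q, q = t / σ - 1 := ⟨_, rfl⟩
  have hq1 : σ * (q + 1) = t := by rw [hq]; field_simp; ring
  have hqpos : 1 ≤ q := by nlinarith
  obtain ⟨c1, hc1⟩ : ∃ c, c = (q + 1) ^ 2 / (4 * q) := ⟨_, rfl⟩
  obtain ⟨c2, hc2⟩ : ∃ c, c = t ^ 2 / (4 * (t - 1)) := ⟨_, rfl⟩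
  obtain ⟨A, hA⟩ : ∃ A, A = √(σ * p * θ) := ⟨_, rfl⟩
  have hc1p : 0 < c1 := by rw [hc1]; positivity
  have hc2p : 0 < c2 := by rw [hc2]; apply div_pos <;> nlinarith
  obtain ⟨α, β, A', hα, hβ, hA'0, hA', hpw⟩ := pointwise hp hpθ ht hL hσ hq hc1 hc2 hA
  obtain ⟨δ, hδ, hδA⟩ := exists_delta hA'0 hA'
  obtain ⟨Cs, hCs, hsplit⟩ := pow_split (by linarith : 1 ≤ θ) hδ
  obtain ⟨Ck, hCk, hkk⟩ := exists_k (N := N) (by omega) hσ0 hσ1 (by linarith : 1 ≤ θ) hσθ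
  obtain ⟨η, hη', hηc, hηs, hη0, hη1, M, hM, -, hM2, hM3⟩ :=
    cutoff N (a := 1/4) (b := 1/2) (by norm_num) (by norm_num)
  obtain ⟨Cb, hCb, hsob⟩ := sobolev hN
  have hη : ContDiff ℝ 1 η := hη'.of_le (by norm_num)
  rw [← hA]
  set vb := volume.real (closedBall (0 : EE N) (7 / 8)) with hvb
  have hvb0 : 0 ≤ vb := by positivity
  set f1 := 1 + (1 - (1 + δ) * (2 * c1 / (q + 1))) ^ 2 / δ with hf1
  set f2 := 1 + (1 - (1 + δ) * (2 * c2 / t)) ^ 2 / δ with hf2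
  have hf10 : 0 < f1 := by positivity
  have hf20 : 0 < f2 := by positivity
  set K1 := f1 * M with hK1
  set K2 := (1 + δ) * c2 * (Cs * Ck * M * (vb * (vb + 1) ^ t + 1)) + f2 * M with hK2
  have hK1p : 0 < K1 := by positivity
  have hK2p : 0 < K2 := by positivity
  have hd0 : 0 < A - (1 + δ) ^ 2 * A' := by linarith
  have hA0 : 0 < A := by linarith
  refine ⟨Cb * ((α * K1 + β * K2) * A / (A - (1 + δ) ^ 2 * A') / β), by positivity, ?_⟩
  rintro Ω hΩ hB U V hns hst
  obtain ⟨k, hk, hk1, hk2⟩ := hkk Ω hΩ hB U V hns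
  obtain ⟨hU, hV, hU0, hV0, eU, eV⟩ := hns
  -- sets
  have b78 : closedBall (0 : EE N) (7 / 8) ⊆ Ω :=
    (closedBall_subset_closedBall (by norm_num)).trans hB
  have b12 : closedBall (0 : EE N) (1 / 2) ⊆ Ω :=
    (closedBall_subset_closedBall (by norm_num)).trans hB
  have hηΩ : tsupport η ⊆ Ω := hηs.trans b12
  -- the truncation
  obtain ⟨T, hT⟩ : ∃ T : EE N → ℝ, T = fun x => gtr k (U x - k) := ⟨_, rfl⟩
  have hTx : ∀ x, gtr k (U x - k) = T x := fun x => by rw [hT]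
  have hT0 : ∀ x, 0 ≤ T x := fun x => by rw [hT]; exact gtr_nonneg hk _
  have hTU : ∀ x ∈ Ω, T x ≤ U x := fun x hx => by
    rw [hT]; exact (gtr_le hk _).trans (max_le (by linarith) (hU0 x hx).le)
  have hTV : ∀ x ∈ closedBall (0 : EE N) (1 / 2), T x ≤ V x ^ σ := fun x hx => by
    rw [hT]
    exact (gtr_le hk _).trans
      (max_le (by linarith [hk1 x hx]) (Real.rpow_nonneg (hV0 x (b12 hx)).le _))
  have hUT : ∀ x, U x ≤ T x + 2 * k := fun x => by
    have := le_gtr hk (U x - k)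
    rw [hTx] at this; linarith
  have hUc := hU.continuousOn
  have hVc := hV.continuousOn
  have hTc : ContinuousOn T Ω := by
    rw [hT]; exact (gtr_contDiff k).continuous.comp_continuousOn (hUc.sub continuousOn_const)
  have cT : ∀ r : ℝ, 0 ≤ r → ContinuousOn (fun x => T x ^ r) Ω := fun r hr =>
    hTc.rpow_const (fun x _ => Or.inr hr)
  have cV : ∀ r : ℝ, ContinuousOn (fun x => V x ^ r) Ω := fun r =>
    hVc.rpow_const (fun x hx => Or.inl (hV0 x hx).ne')
  have cU : ∀ r : ℝ, ContinuousOn (fun x => U x ^ r) Ω := fun r =>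
    hUc.rpow_const (fun x hx => Or.inl (hU0 x hx).ne')
  have hη2 : Continuous (fun x => η x ^ 2) := hη.continuous.pow 2
  have hη2c := sq_compact hηc
  have hη2s := (sq_tsupport η).trans hηs
  have hη2Ω := (sq_tsupport η).trans hηΩ
  set D := ∫ x in closedBall (0 : EE N) (7 / 8), V x ^ t with hD
  -- energies
  obtain ⟨e1, he1⟩ : ∃ e, e = ∫ x, ‖gradient (fun y => T y ^ ((q + 1) / 2) * η y) x‖ ^ 2 :=
    ⟨_, rfl⟩
  obtain ⟨e2, he2⟩ : ∃ e, e = ∫ x, ‖gradient (fun y => V y ^ (t / 2) * η y) x‖ ^ 2 := ⟨_, rfl⟩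
  obtain ⟨X1, hX1⟩ : ∃ X, X = ∫ x, (V x ^ p * T x ^ q) * η x ^ 2 := ⟨_, rfl⟩
  obtain ⟨X2, hX2⟩ : ∃ X, X = ∫ x, (T x ^ θ * V x ^ (t - 1)) * η x ^ 2 := ⟨_, rfl⟩
  obtain ⟨Y1, hY1⟩ : ∃ X, X = ∫ x, (V x ^ ((p - 1) / 2) * T x ^ ((θ - 1) / 2) * T x ^ (q + 1))
    * η x ^ 2 := ⟨_, rfl⟩
  obtain ⟨Y2, hY2⟩ : ∃ X, X = ∫ x, (V x ^ ((p - 1) / 2) * T x ^ ((θ - 1) / 2) * V x ^ t)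
    * η x ^ 2 := ⟨_, rfl⟩
  have E1 : e1 ≤ (1 + δ) * (c1 * σ * X1) + K1 * D := by
    have h := energyU hΩ hU (fun x hx => by
      rw [eU x hx]; exact mul_nonneg hσ0.le (Real.rpow_nonneg (hV0 x hx).le _)) hqpos hδ hk hη
      hηc hηΩ
    simp only [hTx] at h
    rw [← he1, ← hc1, ← hf1] at h
    have h3 : ∫ x, (-lap U x * T x ^ q) * η x ^ 2 = σ * X1 := by
      rw [hX1, ← integral_const_mul]
      congr 1; funext x
      by_cases hx : x ∈ tsupport η
      · rw [eU x (hηΩ hx)]; ring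
      · simp [image_eq_zero_of_notMem_tsupport hx]
    have h4 : ∫ x, T x ^ (q + 1) * ‖gradient η x‖ ^ 2 ≤ M * D := by
      apply cut_le hΩ (cT _ (by linarith)) (cV t) (gradsq_cont hη) (gradsq_compact hηc)
        ((gradsq_tsupport η).trans hηs) hB (fun x => by positivity) hM2
      · intro x hx
        calc T x ^ (q + 1) ≤ (V x ^ σ) ^ (q + 1) :=
              Real.rpow_le_rpow (hT0 x) (hTV x hx) (by linarith)
          _ = V x ^ t := by rw [← Real.rpow_mul (hV0 x (b12 hx)).le, hq1]
      · exact fun x hx => Real.rpow_nonneg (hV0 x hx).le _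
    rw [h3] at h
    have := mul_le_mul_of_nonneg_left h4 hf10.le
    rw [hK1]
    linarith
  have E2 : e2 ≤ (1 + δ) ^ 2 * (c2 * X2) + K2 * D := by
    have h := energyV hΩ hV hV0 ht hδ hη hηc hηΩ
    rw [← he2, ← hc2, ← hf2] at h
    have h3 : ∫ x, (-lap V x * V x ^ (t - 1)) * η x ^ 2 =
        ∫ x, (U x ^ θ * V x ^ (t - 1)) * η x ^ 2 := by
      congr 1; funext x
      by_cases hx : x ∈ tsupport η
      · rw [eV x (hηΩ hx)]
      · simp [image_eq_zero_of_notMem_tsupport hx]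
    have h4 : ∫ x, V x ^ t * ‖gradient η x‖ ^ 2 ≤ M * D := by
      apply cut_le hΩ (cV _) (cV t) (gradsq_cont hη) (gradsq_compact hηc)
        ((gradsq_tsupport η).trans hηs) hB (fun x => by positivity) hM2
      · exact fun x hx => le_rfl
      · exact fun x hx => Real.rpow_nonneg (hV0 x hx).le _
    have h5 : ∫ x, (U x ^ θ * V x ^ (t - 1)) * η x ^ 2 ≤
        ∫ x, ((1 + δ) * (T x ^ θ * V x ^ (t - 1)) + Cs * k ^ θ * V x ^ (t - 1)) * η x ^ 2 := by
      apply cut_mono hΩ ((cU _).mul (cV _)) ((continuousOn_const.mul ((cT _ hθ0.le).mul (cV _))).add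
        (continuousOn_const.mul (cV _))) hη2 hη2c hη2Ω (fun x => sq_nonneg _)
      intro x hx
      have hxΩ := hη2Ω hx
      have := hsplit (T x) k (U x) (hT0 x) hk (hU0 x hxΩ).le (hUT x)
      have := mul_le_mul_of_nonneg_right this (Real.rpow_nonneg (hV0 x hxΩ).le (t - 1))
      simp only [Pi.mul_apply, Pi.add_apply]
      linarith
    have h6 : ∫ x, ((1 + δ) * (T x ^ θ * V x ^ (t - 1)) + Cs * k ^ θ * V x ^ (t - 1)) * η x ^ 2
        = (1 + δ) * X2 + Cs * k ^ θ * ∫ x, V x ^ (t - 1) * η x ^ 2 := by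
      rw [hX2, ← integral_const_mul, ← integral_const_mul, ← integral_add]
      · congr 1; funext x; ring
      · exact (integrable_mul_cutoff hΩ ((cT _ hθ0.le).mul (cV _)) hη2 hη2c hη2Ω).const_mul _
      · exact (integrable_mul_cutoff hΩ (cV _) hη2 hη2c hη2Ω).const_mul _
    have h7 : ∫ x, V x ^ (t - 1) * η x ^ 2 ≤
        M * ∫ x in closedBall (0 : EE N) (7 / 8), V x ^ (t - 1) := by
      apply cut_le hΩ (cV _) (cV _) hη2 hη2c hη2s hB (fun x => sq_nonneg _) hM3
      · exact fun x hx => le_rfl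
      · exact fun x hx => Real.rpow_nonneg (hV0 x hx).le _
    have h8 := k_bound (isCompact_closedBall (0 : EE N) (7 / 8)) (hVc.mono b78)
      (fun x hx => hV0 x (b78 hx)) ht
    rw [← hvb, ← hD] at h8
    have hJ0 : 0 ≤ ∫ x in closedBall (0 : EE N) (7 / 8), V x ^ (t - 1) :=
      setIntegral_nonneg measurableSet_closedBall
        fun x hx => Real.rpow_nonneg (hV0 x (b78 hx)).le _
    set J := ∫ x in closedBall (0 : EE N) (7 / 8), V x ^ (t - 1)
    set I := ∫ x in closedBall (0 : EE N) (7 / 8), V x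
    have h9 : Cs * k ^ θ * ∫ x, V x ^ (t - 1) * η x ^ 2 ≤
        Cs * Ck * M * (vb * (vb + 1) ^ t + 1) * D := by
      calc Cs * k ^ θ * ∫ x, V x ^ (t - 1) * η x ^ 2 ≤ Cs * k ^ θ * (M * J) :=
            mul_le_mul_of_nonneg_left h7 (by positivity)
        _ ≤ Cs * (Ck * I) * (M * J) := by gcongr
        _ = Cs * Ck * M * (I * J) := by ring
        _ ≤ Cs * Ck * M * ((vb * (vb + 1) ^ t + 1) * D) :=
            mul_le_mul_of_nonneg_left h8 (by positivity)
        _ = _ := by ring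
    rw [h6] at h5
    rw [h3] at h
    have a1 := mul_le_mul_of_nonneg_left (h5.trans (add_le_add_right h9 _))
      (by positivity : 0 ≤ (1 + δ) * c2)
    have a2 := mul_le_mul_of_nonneg_left h4 hf20.le
    rw [hK2]
    linarith
  have cW : ContinuousOn (fun x => V x ^ ((p - 1) / 2) * U x ^ ((θ - 1) / 2)) Ω := (cV _).mul (cU _)
  have TUθ : ∀ x ∈ Ω, T x ^ ((θ - 1) / 2) ≤ U x ^ ((θ - 1) / 2) := fun x hx =>
    Real.rpow_le_rpow (hT0 x) (hTU x hx) (by linarith)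
  have S1 : A * Y1 ≤ e1 := by
    have h := stab_ext hΩ cW A hst (φ := fun y => T y ^ ((q + 1) / 2) * η y)
      (contDiff_mul_cutoff hΩ (by
        rw [hT]
        have : ContDiff ℝ 1 (fun τ => gtr k (τ - k) ^ ((q + 1) / 2)) :=
          ContDiff.rpow_const_of_le (m := 1)
            (((gtr_contDiff k).of_le (by norm_num)).comp (contDiff_id.sub contDiff_const))
            (by push_cast; linarith)
        exact this.comp_contDiffOn (hU.of_le (by norm_num))) hη hηΩ) hηc.mul_left
      (tsupport_mul_cutoff.trans hηΩ)
    rw [he1]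
    refine le_trans (mul_le_mul_of_nonneg_left ?_ hA0.le) h
    have e : ∀ x, V x ^ ((p - 1) / 2) * U x ^ ((θ - 1) / 2) * (T x ^ ((q + 1) / 2) * η x) ^ 2 =
        (V x ^ ((p - 1) / 2) * U x ^ ((θ - 1) / 2) * T x ^ (q + 1)) * η x ^ 2 := fun x => by
      rw [mul_pow, rpow_half_sq (hT0 x)]; ring
    simp only [e]
    rw [hY1]
    apply cut_mono hΩ (((cV _).mul (cT _ (by linarith))).mul (cT _ (by linarith)))
      (cW.mul (cT _ (by linarith))) hη2 hη2c hη2Ω (fun x => sq_nonneg _)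
    intro x hx
    have h1 := TUθ x (hη2Ω hx)
    have h2 := hV0 x (hη2Ω hx)
    have h3 := hT0 x
    simp only [Pi.mul_apply]
    gcongr
  have S2 : A * Y2 ≤ e2 := by
    have hVcd : ContDiff ℝ 1 (fun y => V y ^ (t / 2) * η y) := (contDiff_mul_cutoff hΩ ((hV.of_le (by norm_num)).rpow_const_of_ne
        (fun x hx => (hV0 x hx).ne')) hη hηΩ)
    have h := stab_ext hΩ cW A hst (φ := fun y => V y ^ (t / 2) * η y)
      hVcd hηc.mul_left (tsupport_mul_cutoff.trans hηΩ)
    rw [he2]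
    refine le_trans (mul_le_mul_of_nonneg_left ?_ hA0.le) h
    have e : ∀ x, V x ^ ((p - 1) / 2) * U x ^ ((θ - 1) / 2) * (V x ^ (t / 2) * η x) ^ 2 =
        (V x ^ ((p - 1) / 2) * U x ^ ((θ - 1) / 2) * V x ^ t) * η x ^ 2 := fun x => by
      by_cases hx : x ∈ tsupport η
      · rw [mul_pow, rpow_half_sq (hV0 x (hηΩ hx)).le]; ring
      · simp [image_eq_zero_of_notMem_tsupport hx]
    simp only [e]
    rw [hY2]
    apply cut_mono hΩ (((cV _).mul (cT _ (by linarith))).mul (cV _))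
      (cW.mul (cV _)) hη2 hη2c hη2Ω (fun x => sq_nonneg _)
    intro x hx
    have h1 := TUθ x (hη2Ω hx)
    have h2 := hV0 x (hη2Ω hx)
    simp only [Pi.mul_apply]
    gcongr
  have PW : α * (c1 * σ * X1) + β * (c2 * X2) ≤ A' * (α * Y1 + β * Y2) := by
    have i1 := integrable_mul_cutoff hΩ ((cV p).mul (cT q (by linarith))) hη2 hη2c hη2Ω
    have i2 := integrable_mul_cutoff hΩ ((cT θ hθ0.le).mul (cV (t - 1))) hη2 hη2c hη2Ω
    have i3 := integrable_mul_cutoff hΩ (((cV ((p - 1) / 2)).mul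
      (cT ((θ - 1) / 2) (by linarith))).mul (cT (q + 1) (by linarith))) hη2 hη2c hη2Ω
    have i4 := integrable_mul_cutoff hΩ (((cV ((p - 1) / 2)).mul
      (cT ((θ - 1) / 2) (by linarith))).mul (cV t)) hη2 hη2c hη2Ω
    simp only [Pi.mul_apply] at i1 i2 i3 i4
    rw [hX1, hX2, hY1, hY2]
    simp only [← integral_const_mul]
    rw [← integral_add (((i1.const_mul _).const_mul _)) ((i2.const_mul _).const_mul _),
      ← integral_add (i3.const_mul _) (i4.const_mul _), ← integral_const_mul]
    apply integral_mono ((((i1.const_mul _).const_mul _)).add ((i2.const_mul _).const_mul _))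
      (((i3.const_mul _).add (i4.const_mul _)).const_mul _)
    intro x
    simp only
    by_cases hx : x ∈ tsupport η
    · have := hpw (T x) (V x) (hT0 x) (hV0 x (hηΩ hx)) (hTV x (hηs hx))
      have := mul_le_mul_of_nonneg_right this (sq_nonneg (η x))
      simp only [Pi.mul_apply, Pi.add_apply] at this ⊢
      linarith
    · simp [image_eq_zero_of_notMem_tsupport hx]
  have hX1nn : 0 ≤ X1 := by
    rw [hX1]
    apply integral_nonneg
    intro x
    simp only [Pi.zero_apply]
    by_cases hx : x ∈ tsupport η
    · have := hV0 x (hηΩ hx)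
      have := hT0 x
      positivity
    · simp [image_eq_zero_of_notMem_tsupport hx]
  have he1nn : 0 ≤ e1 := by rw [he1]; positivity
  have hfin := absorb (K1 := K1) (K2 := K2) (D := D) hα hβ hA'0 hA' hδ hδA (by positivity) he1nn E1 E2 S1 S2 PW
  have hVcd : ContDiff ℝ 1 (fun y => V y ^ (t / 2) * η y) :=
    contDiff_mul_cutoff hΩ ((hV.of_le (by norm_num)).rpow_const_of_ne
      (fun x hx => (hV0 x hx).ne')) hη hηΩ
  have hsb := hsob _ hVcd hηc.mul_left
  rw [← he2] at hsb
  have hN' : (3 : ℝ) ≤ N := by exact_mod_cast hN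
  have hN2 : (0:ℝ) < N - 2 := by linarith
  have hκ : 0 < (N : ℝ) / (N - 2) := by positivity
  have hfinal : ∫ x in closedBall (0 : EE N) (1 / 4), V x ^ ((N : ℝ) / (N - 2) * t) ≤
      ∫ x, |V x ^ (t / 2) * η x| ^ (2 * ((N : ℝ) / (N - 2))) := by
    have hIntg : Integrable (fun x => |V x ^ (t / 2) * η x| ^ (2 * ((N : ℝ) / (N - 2)))) := by
      apply Continuous.integrable_of_hasCompactSupport
      · exact hVcd.continuous.abs.rpow_const (fun x => Or.inr (by positivity))
      · refine (hηc.mul_left (f := fun x => V x ^ (t / 2))).mono ?_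
        intro x hx
        simp only [Function.mem_support, ne_eq] at hx ⊢
        intro h0
        apply hx
        simp only [Pi.mul_apply] at h0
        rw [h0, abs_zero, Real.zero_rpow (by positivity)]
    calc _ = ∫ x in closedBall (0 : EE N) (1 / 4),
          |V x ^ (t / 2) * η x| ^ (2 * ((N : ℝ) / (N - 2))) := by
          apply setIntegral_congr_fun measurableSet_closedBall
          intro x hx
          have hx0 := hV0 x (hB (closedBall_subset_closedBall (by norm_num) hx))
          simp only [hη1 x hx, mul_one]
          rw [abs_of_nonneg (by positivity), ← Real.rpow_mul hx0.le]
          congr 1; ring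
      _ ≤ _ := setIntegral_le_integral hIntg (by
          filter_upwards with x
          positivity)
  have hl0 : 0 ≤ ∫ x in closedBall (0 : EE N) (1 / 4), V x ^ ((N : ℝ) / (N - 2) * t) :=
    setIntegral_nonneg measurableSet_closedBall fun x hx =>
      Real.rpow_nonneg (hV0 x (hB (closedBall_subset_closedBall (by norm_num) hx))).le _
  calc _ ≤ _ := Real.rpow_le_rpow hl0 hfinal (by positivity)
    _ ≤ _ := hsb
    _ ≤ Cb * ((α * K1 + β * K2) * A / (A - (1 + δ) ^ 2 * A') / β * D) :=
        mul_le_mul_of_nonneg_left hfin hCb.le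
    _ = _ := by ring

/-- Change of variables `z = y + R x`. -/
lemma cov {N : ℕ} (y : EE N) {R : ℝ} (hR : 0 < R) {S : Set (EE N)} (hS : MeasurableSet S)
    (F : EE N → ℝ) :
    R ^ (-(N : ℝ)) * ∫ z in S, F z = ∫ x in (fun x => y + R • x) ⁻¹' S, F (y + R • x) := by
  have hm : MeasurableSet ((fun x : EE N => y + R • x) ⁻¹' S) :=
    hS.preimage (by fun_prop)
  rw [← integral_indicator hS, ← integral_indicator hm]
  have e : (indicator ((fun x : EE N => y + R • x) ⁻¹' S) fun x => F (y + R • x)) =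
      fun x => (fun z => indicator S F (y + z)) (R • x) := by
    funext x
    simp only [indicator]
    rfl
  rw [e, Measure.integral_comp_smul, integral_add_left_eq_self (μ := volume) (indicator S F) y]
  rw [smul_eq_mul, abs_of_pos (by positivity)]
  congr 1
  rw [Real.rpow_neg hR.le, Real.rpow_natCast]
  simp

lemma preimage_ball {N : ℕ} (y : EE N) {R : ℝ} (hR : 0 < R) (r : ℝ) :
    (fun x : EE N => y + R • x) ⁻¹' ball y (R * r) = ball 0 r := by
  ext x
  simp [dist_eq_norm, norm_smul, abs_of_pos hR, hR]

lemma exists_scale {p θ lam gam σ R : ℝ} (hp : 1 < p) (hθ : 1 < θ) (hlam : 0 < lam)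
    (hgam : 0 < gam) (hσ : 0 < σ) (hR : 0 < R) :
    ∃ a b : ℝ, 0 < a ∧ 0 < b ∧ a * R ^ 2 * lam = σ * b ^ p ∧ b * R ^ 2 * gam = a ^ θ := by
  have hpθ : 0 < p * θ - 1 := by nlinarith
  set g := R ^ 2 * gam with hg
  have hg0 : 0 < g := by positivity
  set E := R ^ 2 * lam * g ^ p / σ with hE
  have hE0 : 0 < E := by positivity
  set a := E ^ (1 / (p * θ - 1)) with ha
  have ha0 : 0 < a := by positivity
  have haE : a ^ (p * θ - 1) = E := by
    rw [ha, ← Real.rpow_mul hE0.le, one_div_mul_cancel hpθ.ne', Real.rpow_one]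
  refine ⟨a, a ^ θ / g, ha0, by positivity, ?_, ?_⟩
  · rw [Real.div_rpow (by positivity) hg0.le, ← Real.rpow_mul ha0.le,
      show θ * p = (p * θ - 1) + 1 by ring, Real.rpow_add ha0, haE, Real.rpow_one, hE]
    have : 0 < g ^ p := by positivity
    field_simp
  · rw [mul_assoc, ← hg]; field_simp

theorem step {N : ℕ} (hN : 3 ≤ N) {p θ t lam gam : ℝ} (hp : 1 < p) (hpθ : p ≤ θ) (ht : 2 ≤ t)
    (hL : Lpoly p θ t < 0) (hlam : 0 < lam) (hgam : 0 < gam) :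
    ∃ C : ℝ, 0 < C ∧ ∀ (Ω : Set (EE N)), IsOpen Ω → ∀ u v : EE N → ℝ,
      IsSolution Ω lam gam p θ u v → IsStable Ω lam gam p θ u v →
      ∀ (y : EE N) (R : ℝ), 0 < R → closedBall y R ⊆ Ω →
      (R ^ (-(N : ℝ)) * ∫ x in ball y (R * (1 / 4)), (v x + 1) ^ ((N : ℝ) / (N - 2) * t)) ^
        (((N : ℝ) - 2) / N) ≤ C * (R ^ (-(N : ℝ)) * ∫ x in ball y (R * 1), (v x + 1) ^ t) := by
  have hN' : (3 : ℝ) ≤ N := by exact_mod_cast hN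
  have hN2 : (0:ℝ) < N - 2 := by linarith
  obtain ⟨σ, hσ⟩ : ∃ σ, σ = (p + 1) / (θ + 1) := ⟨_, rfl⟩
  have hσ0 : 0 < σ := by rw [hσ]; apply div_pos <;> linarith
  obtain ⟨C, hC, hstep⟩ := step_unit hN hp hpθ ht hL hσ
  refine ⟨C, hC, ?_⟩
  intro Ω hΩ u v hsol hstab y R hR hball
  obtain ⟨a, b, ha, hb, hab1, hab2⟩ :=
    exists_scale hp (by linarith : 1 < θ) hlam hgam hσ0 hR
  obtain ⟨hu, hv, hu0, hv0, eu, ev⟩ := hsol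
  obtain ⟨Ω', hΩ'⟩ : ∃ S : Set (EE N), S = (fun x => y + R • x) ⁻¹' Ω := ⟨_, rfl⟩
  have hmem : ∀ x, x ∈ Ω' ↔ y + R • x ∈ Ω := fun x => by rw [hΩ']; rfl
  have hopen : IsOpen Ω' := by rw [hΩ']; exact hΩ.preimage (by fun_prop)
  have hsub : closedBall 0 1 ⊆ Ω' := by
    intro x hx
    rw [hmem]
    apply hball
    rw [mem_closedBall, dist_eq_norm, add_sub_cancel_left, norm_smul, Real.norm_eq_abs,
      abs_of_pos hR]
    have : ‖x‖ ≤ 1 := by simpa using hx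
    nlinarith
  have hvp : ∀ x ∈ Ω', 0 < v (y + R • x) + 1 := fun x hx => by
    have := hv0 _ ((hmem x).1 hx); linarith
  have hup : ∀ x ∈ Ω', 0 < u (y + R • x) + 1 := fun x hx => by
    have := hu0 _ ((hmem x).1 hx); linarith
  have hmaps : MapsTo (fun x => y + R • x) Ω' Ω := fun x hx => (hmem x).1 hx
  have hns : NS Ω' σ p θ (fun x => a * (u (y + R • x) + 1)) (fun x => b * (v (y + R • x) + 1)) := by
    refine ⟨?_, ?_, ?_, ?_, ?_, ?_⟩
    · exact contDiffOn_const.mul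
        ((hu.comp (affine_contDiff y R).contDiffOn hmaps).add contDiffOn_const)
    · exact contDiffOn_const.mul
        ((hv.comp (affine_contDiff y R).contDiffOn hmaps).add contDiffOn_const)
    · exact fun x hx => mul_pos ha (hup x hx)
    · exact fun x hx => mul_pos hb (hvp x hx)
    · intro x hx
      have h1 := eu _ ((hmem x).1 hx)
      have h2 : lap (fun x => a * (u (y + R • x) + 1)) x = a * (R ^ 2 * lap u (y + R • x)) := by
        rw [lap_const_mul (fun x => u (y + R • x) + 1), lap_add_const (fun x => u (y + R • x)),
          lap_affine]
      rw [h2, Real.mul_rpow hb.le (hvp x hx).le]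
      linear_combination a * R ^ 2 * h1 + (v (y + R • x) + 1) ^ p * hab1
    · intro x hx
      have h1 := ev _ ((hmem x).1 hx)
      have h2 : lap (fun x => b * (v (y + R • x) + 1)) x = b * (R ^ 2 * lap v (y + R • x)) := by
        rw [lap_const_mul (fun x => v (y + R • x) + 1), lap_add_const (fun x => v (y + R • x)),
          lap_affine]
      rw [h2, Real.mul_rpow ha.le (hup x hx).le, ← hab2]
      linear_combination b * R ^ 2 * h1
  have hst : ∀ φ : EE N → ℝ, IsTestFun Ω' φ →
      √(σ * p * θ) * ∫ x in Ω', (b * (v (y + R • x) + 1)) ^ ((p - 1) / 2) *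
        (a * (u (y + R • x) + 1)) ^ ((θ - 1) / 2) * φ x ^ 2 ≤
        ∫ x in Ω', ‖gradient φ x‖ ^ 2 := by
    rintro φ ⟨hφ, hφc, hφs⟩
    obtain ⟨ψ, hψ⟩ : ∃ ψ : EE N → ℝ, ψ = fun z => φ (R⁻¹ • (z - y)) := ⟨_, rfl⟩
    have hψφ : ∀ x, ψ (y + R • x) = φ x := fun x => by
      rw [hψ]; simp [smul_smul, inv_mul_cancel₀ hR.ne']
    have hinv : ∀ z : EE N, y + R • (R⁻¹ • (z - y)) = z := fun z => by
      rw [smul_smul, mul_inv_cancel₀ hR.ne', one_smul]; abel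
    have hsupp : Function.support ψ ⊆ (fun x => y + R • x) '' tsupport φ := by
      intro z hz
      refine ⟨R⁻¹ • (z - y), ?_, hinv z⟩
      apply subset_tsupport
      rw [hψ] at hz
      exact hz
    have hK : IsCompact ((fun x => y + R • x) '' tsupport φ) :=
      hφc.isCompact.image (by fun_prop)
    have hts : tsupport ψ ⊆ (fun x => y + R • x) '' tsupport φ :=
      closure_minimal hsupp hK.isClosed
    have htest : IsTestFun Ω ψ := by
      refine ⟨?_, ?_, ?_⟩
      · rw [hψ]; exact hφ.comp (by fun_prop)
      · exact hK.of_isClosed_subset (isClosed_tsupport _) hts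
      · refine hts.trans ?_
        rintro _ ⟨x, hx, rfl⟩
        exact hmaps (hφs hx)
    have h := hstab ψ htest
    have h' := mul_le_mul_of_nonneg_left h (by positivity : 0 ≤ R ^ (-(N : ℝ)))
    rw [mul_left_comm, cov y hR hΩ.measurableSet, cov y hR hΩ.measurableSet, ← hΩ'] at h'
    simp only [hψφ] at h'
    have hgrad : ∀ x, ‖gradient φ x‖ ^ 2 = R ^ 2 * ‖gradient ψ (y + R • x)‖ ^ 2 := by
      intro x
      have e : fderiv ℝ φ x = R • fderiv ℝ ψ (y + R • x) := by
        ext w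
        rw [← show (fun z => ψ (y + R • z)) = φ from funext hψφ, fderiv_affine]
        rfl
      rw [norm_gradient, norm_gradient, e, norm_smul, Real.norm_eq_abs, mul_pow, sq_abs]
    simp only [hgrad]
    rw [integral_const_mul]
    refine le_trans (le_of_eq ?_) (mul_le_mul_of_nonneg_left h' (by positivity : 0 ≤ R ^ 2))
    have e1 : ∫ x in Ω', (b * (v (y + R • x) + 1)) ^ ((p - 1) / 2) *
        (a * (u (y + R • x) + 1)) ^ ((θ - 1) / 2) * φ x ^ 2 =
        (b ^ ((p - 1) / 2) * a ^ ((θ - 1) / 2)) * ∫ x in Ω', (v (y + R • x) + 1) ^ ((p - 1) / 2) *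
        (u (y + R • x) + 1) ^ ((θ - 1) / 2) * φ x ^ 2 := by
      rw [← integral_const_mul]
      apply setIntegral_congr_fun hopen.measurableSet
      intro x hx
      simp only
      rw [Real.mul_rpow hb.le (hvp x hx).le, Real.mul_rpow ha.le (hup x hx).le]; ring
    rw [e1]
    have hθ0 : 0 < θ := by linarith
    have hp0 : 0 < p := by linarith
    have e2 : R ^ 4 * (lam * gam) = σ * (b ^ (p - 1) * a ^ (θ - 1)) := by
      have q1 : b ^ p = b ^ (p - 1) * b := by rw [Real.rpow_sub_one hb.ne']; field_simp
      have q2 : a ^ θ = a ^ (θ - 1) * a := by rw [Real.rpow_sub_one ha.ne']; field_simp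
      rw [q1] at hab1
      rw [q2] at hab2
      have : (a * b) * (R ^ 4 * (lam * gam)) = (a * b) * (σ * (b ^ (p - 1) * a ^ (θ - 1))) := by
        linear_combination (b * R ^ 2 * gam) * hab1 + (σ * (b ^ (p - 1) * b)) * hab2
      exact mul_left_cancel₀ (by positivity) this
    have key : √(σ * p * θ) * (b ^ ((p - 1) / 2) * a ^ ((θ - 1) / 2)) =
        R ^ 2 * √(lam * gam * p * θ) := by
     rw [← abs_of_pos (by positivity : 0 < √(σ * p * θ) * (b ^ ((p - 1) / 2) * a ^ ((θ - 1) / 2))),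
      ← abs_of_pos (by positivity : 0 < R ^ 2 * √(lam * gam * p * θ)), ← sq_eq_sq_iff_abs_eq_abs,
      mul_pow, mul_pow, mul_pow, rpow_half_sq hb.le, rpow_half_sq ha.le,
      Real.sq_sqrt (by positivity), Real.sq_sqrt (by positivity)]
     linear_combination (-(p * θ)) * e2
    rw [← mul_assoc, key, mul_assoc]
  have hfin := hstep Ω' hopen hsub _ _ hns hst
  have hcvo : ContinuousOn (fun x => v (y + R • x) + 1) Ω' :=
    ((hv.continuousOn.comp (by fun_prop : Continuous (fun x : EE N => y + R • x)).continuousOn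
      hmaps).add continuousOn_const)
  have hcv : ∀ r : ℝ, ContinuousOn (fun x => (v (y + R • x) + 1) ^ r) Ω' := fun r =>
    hcvo.rpow_const (fun x hx => Or.inl (hvp x hx).ne')
  have hIntg : ∀ r c : ℝ, c ≤ 1 →
      IntegrableOn (fun x => (v (y + R • x) + 1) ^ r) (closedBall 0 c) := fun r c hc =>
    ((hcv r).mono ((closedBall_subset_closedBall hc).trans hsub)).integrableOn_compact
      (isCompact_closedBall _ _)
  rw [cov y hR measurableSet_ball, cov y hR measurableSet_ball, preimage_ball y hR,
    preimage_ball y hR]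
  have hpull : ∀ r c : ℝ, c ≤ 1 → ∫ x in closedBall (0 : EE N) c, (b * (v (y + R • x) + 1)) ^ r =
      b ^ r * ∫ x in closedBall (0 : EE N) c, (v (y + R • x) + 1) ^ r := by
    intro r c hc
    rw [← integral_const_mul]
    apply setIntegral_congr_fun measurableSet_closedBall
    intro x hx
    simp only
    rw [Real.mul_rpow hb.le (hvp x (hsub (closedBall_subset_closedBall hc hx))).le]
  rw [hpull _ _ (by norm_num), hpull _ _ (by norm_num)] at hfin
  have hnn : ∀ r c : ℝ, c ≤ 1 → ∀ᵐ x ∂(volume.restrict (closedBall (0 : EE N) c)),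
      0 ≤ (v (y + R • x) + 1) ^ r := by
    intro r c hc
    filter_upwards [ae_restrict_mem measurableSet_closedBall] with x hx
    exact Real.rpow_nonneg (hvp x (hsub (closedBall_subset_closedBall hc hx))).le _
  have hI0 : 0 ≤ ∫ x in closedBall (0 : EE N) (1 / 4),
      (v (y + R • x) + 1) ^ ((N : ℝ) / (N - 2) * t) :=
    integral_nonneg_of_ae (hnn _ _ (by norm_num))
  rw [Real.mul_rpow (by positivity) hI0, ← Real.rpow_mul hb.le,
    show (N : ℝ) / (N - 2) * t * ((N - 2) / N) = t by field_simp] at hfin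
  have hbt : 0 < b ^ t := by positivity
  have hfin2 : (∫ x in closedBall (0 : EE N) (1 / 4),
      (v (y + R • x) + 1) ^ ((N : ℝ) / (N - 2) * t)) ^ (((N : ℝ) - 2) / N) ≤
      C * ∫ x in closedBall (0 : EE N) (7 / 8), (v (y + R • x) + 1) ^ t := by
    apply le_of_mul_le_mul_left _ hbt
    linarith
  refine le_trans ?_ (hfin2.trans ?_)
  · apply Real.rpow_le_rpow _ _ (by positivity)
    · apply integral_nonneg_of_ae
      exact ae_restrict_of_ae_restrict_of_subset ball_subset_closedBall (hnn _ _ (by norm_num))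
    · exact setIntegral_mono_set (hIntg _ _ (by norm_num)) (hnn _ _ (by norm_num))
        ball_subset_closedBall.eventuallyLE
  · apply mul_le_mul_of_nonneg_left _ hC.le
    apply setIntegral_mono_set ((hIntg t 1 le_rfl).mono_set ball_subset_closedBall)
    · exact ae_restrict_of_ae_restrict_of_subset ball_subset_closedBall (hnn _ _ le_rfl)
    · exact (closedBall_subset_ball (by norm_num)).eventuallyLE

/-- The iterated estimate with exponent `s`. -/
def PP {N : ℕ} (Ω : Set (EE N)) (lam gam p θ s : ℝ) : Prop :=
  ∃ (ℓ : ℕ) (C : ℝ), 0 < C ∧ ∀ u v : EE N → ℝ,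
      IsSolution Ω lam gam p θ u v → IsStable Ω lam gam p θ u v →
      ∀ (y : EE N) (R : ℝ), 0 < R → closedBall y R ⊆ Ω →
        (R ^ (-(N : ℝ)) * ∫ x in ball y (R / 2 ^ ℓ), (v x + 1) ^ s) ^ (2 / s)
          ≤ C * (R ^ (-(N : ℝ)) * ∫ x in ball y R, (v x + 1) ^ (2 : ℝ))

lemma sol_cont {N : ℕ} {Ω : Set (EE N)} {lam gam p θ : ℝ} {u v : EE N → ℝ}
    (h : IsSolution Ω lam gam p θ u v) (s : ℝ) : ContinuousOn (fun x => (v x + 1) ^ s) Ω :=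
  (h.2.1.continuousOn.add continuousOn_const).rpow_const
    (fun x hx => Or.inl (by have := h.2.2.2.1 x hx; exact (by linarith : 0 < v x + 1).ne'))

lemma sol_int_nonneg {N : ℕ} {Ω : Set (EE N)} {lam gam p θ : ℝ} {u v : EE N → ℝ}
    (h : IsSolution Ω lam gam p θ u v) (s : ℝ) {S : Set (EE N)} (hS : MeasurableSet S)
    (hsub : S ⊆ Ω) : 0 ≤ ∫ x in S, (v x + 1) ^ s :=
  setIntegral_nonneg hS fun x hx => by have := h.2.2.2.1 x (hsub hx); positivity

lemma PP_two {N : ℕ} (Ω : Set (EE N)) (lam gam p θ : ℝ) : PP Ω lam gam p θ 2 := by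
  refine ⟨0, 1, one_pos, ?_⟩
  intro u v _ _ y R _ _
  simp

lemma ball_div_sub {N : ℕ} {Ω : Set (EE N)} {y : EE N} {R : ℝ} (hR : 0 < R)
    (hb : closedBall y R ⊆ Ω) (ℓ : ℕ) : closedBall y (R / 2 ^ ℓ) ⊆ Ω :=
  (closedBall_subset_closedBall
    (div_le_self hR.le (one_le_pow₀ (by norm_num : (1:ℝ) ≤ 2)))).trans hb

lemma PP_step {N : ℕ} (hN : 3 ≤ N) {Ω : Set (EE N)} (hΩ : IsOpen Ω) {p θ t lam gam : ℝ}
    (hp : 1 < p) (hpθ : p ≤ θ) (ht : 2 ≤ t)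
    (hL : Lpoly p θ t < 0) (hlam : 0 < lam) (hgam : 0 < gam)
    (h : PP Ω lam gam p θ t) : PP Ω lam gam p θ ((N : ℝ) / (N - 2) * t) := by
  have hN' : (3 : ℝ) ≤ N := by exact_mod_cast hN
  have hN2 : (0:ℝ) < N - 2 := by linarith
  have ht0 : 0 < t := by linarith
  obtain ⟨C, hC, hst⟩ := step hN hp hpθ ht hL hlam hgam
  obtain ⟨ℓ, C', hC', hpp⟩ := h
  obtain ⟨E, hE⟩ : ∃ E : ℝ, E = ((2:ℝ) ^ ℓ) ^ (N : ℝ) := ⟨_, rfl⟩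
  have hE1 : 1 ≤ E := by
    rw [hE]; exact Real.one_le_rpow (one_le_pow₀ (by norm_num)) (by positivity)
  have hE0 : 0 < E := by linarith
  refine ⟨ℓ + 2, (C * E) ^ (2 / t) * C', by positivity, ?_⟩
  intro u v hsol hstab y R hR hball
  have hR' : 0 < R / 2 ^ ℓ := by positivity
  have hb' := ball_div_sub hR hball ℓ
  have h1 := hst Ω hΩ u v hsol hstab y (R / 2 ^ ℓ) hR' hb'
  have h2 := hpp u v hsol hstab y R hR hball
  have hRE : (R / 2 ^ ℓ) ^ (-(N : ℝ)) = E * R ^ (-(N : ℝ)) := by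
    rw [Real.div_rpow hR.le (by positivity), hE, Real.rpow_neg (by positivity : (0:ℝ) ≤ 2 ^ ℓ)]
    field_simp
  rw [hRE, mul_one, show R / 2 ^ ℓ * (1 / 4) = R / 2 ^ (ℓ + 2) by rw [pow_add]; field_simp; norm_num]
    at h1
  have hX : 0 ≤ ∫ x in ball y (R / 2 ^ (ℓ + 2)), (v x + 1) ^ ((N : ℝ) / (N - 2) * t) :=
    sol_int_nonneg hsol _ measurableSet_ball
      (ball_subset_closedBall.trans (ball_div_sub hR hball _))
  have hY : 0 ≤ ∫ x in ball y (R / 2 ^ ℓ), (v x + 1) ^ t :=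
    sol_int_nonneg hsol _ measurableSet_ball
      (ball_subset_closedBall.trans (ball_div_sub hR hball _))
  have hRn : 0 < R ^ (-(N : ℝ)) := by positivity
  generalize (∫ x in ball y (R / 2 ^ (ℓ + 2)), (v x + 1) ^ ((N : ℝ) / (N - 2) * t)) = X at *
  generalize (∫ x in ball y (R / 2 ^ ℓ), (v x + 1) ^ t) = Y at *
  generalize (R ^ (-(N : ℝ))) = ρ at *
  calc (ρ * X) ^ (2 / ((N : ℝ) / (N - 2) * t)) = ((ρ * X) ^ (((N : ℝ) - 2) / N)) ^ (2 / t) := by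
        rw [← Real.rpow_mul (by positivity)]; congr 1; field_simp
    _ ≤ ((E * ρ * X) ^ (((N : ℝ) - 2) / N)) ^ (2 / t) := by
        apply Real.rpow_le_rpow (by positivity) _ (by positivity)
        apply Real.rpow_le_rpow (by positivity) _ (by positivity)
        rw [mul_assoc]
        exact le_mul_of_one_le_left (by positivity) hE1
    _ ≤ (C * (E * ρ * Y)) ^ (2 / t) :=
        Real.rpow_le_rpow (by positivity) h1 (by positivity)
    _ = (C * E) ^ (2 / t) * (ρ * Y) ^ (2 / t) := by
        rw [← Real.mul_rpow (by positivity) (by positivity)]; congr 1; ring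
    _ ≤ _ := by
        rw [mul_assoc]
        exact mul_le_mul_of_nonneg_left h2 (by positivity)

lemma PP_down {N : ℕ} {Ω : Set (EE N)} {p θ s s' lam gam : ℝ}
    (hs : 2 ≤ s) (hss : s ≤ s') (h : PP Ω lam gam p θ s') : PP Ω lam gam p θ s := by
  have hs0 : 0 < s := by linarith
  have hs0' : 0 < s' := by linarith
  obtain ⟨ℓ, C', hC', hpp⟩ := h
  obtain ⟨B, hB⟩ : ∃ B : Set (EE N), B = closedBall 0 (1 / 2 ^ (ℓ + 1)) := ⟨_, rfl⟩
  have hBc : IsCompact B := by rw [hB]; exact isCompact_closedBall _ _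
  have hV : 0 < volume.real B + 1 := by positivity
  obtain ⟨V, hVe⟩ : ∃ V, V = volume.real B + 1 := ⟨_, rfl⟩
  rw [← hVe] at hV
  refine ⟨ℓ + 1, V ^ (2 / s) * C', by positivity, ?_⟩
  intro u v hsol hstab y R hR hball
  have h2 := hpp u v hsol hstab y R hR hball
  refine le_trans ?_ ((mul_le_mul_of_nonneg_left h2 (by positivity : 0 ≤ V ^ (2 / s))).trans_eq
    (by ring))
  have ed : ∀ k : ℕ, R / 2 ^ k = R * (1 / 2 ^ k) := fun k => by ring
  rw [ed, ed, cov y hR measurableSet_ball, cov y hR measurableSet_ball, preimage_ball y hR,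
    preimage_ball y hR]
  have hm : ∀ x ∈ closedBall (0 : EE N) 1, y + R • x ∈ Ω := by
    intro x hx
    apply hball
    rw [mem_closedBall, dist_eq_norm, add_sub_cancel_left, norm_smul, Real.norm_eq_abs,
      abs_of_pos hR]
    have : ‖x‖ ≤ 1 := by simpa using hx
    nlinarith
  have hle1 : ∀ k : ℕ, (1:ℝ) / 2 ^ k ≤ 1 := fun k =>
    div_le_self zero_le_one (one_le_pow₀ (by norm_num))
  have hlt : (1:ℝ) / 2 ^ (ℓ + 1) < 1 / 2 ^ ℓ := by
    apply one_div_lt_one_div_of_lt (by positivity)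
    rw [pow_succ]
    have : (0:ℝ) < 2 ^ ℓ := by positivity
    linarith
  have hcont : ∀ r : ℝ, ContinuousOn (fun x => (v (y + R • x) + 1) ^ r) (closedBall (0 : EE N) 1) :=
    fun r => (sol_cont hsol r).comp
      (by fun_prop : Continuous (fun x : EE N => y + R • x)).continuousOn hm
  have hpos : ∀ x ∈ closedBall (0 : EE N) 1, 0 < v (y + R • x) + 1 := fun x hx => by
    have := hsol.2.2.2.1 _ (hm x hx); linarith
  have hBs : B ⊆ closedBall 0 1 := by
    rw [hB]; exact closedBall_subset_closedBall (hle1 _)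
  have hnn : ∀ (r : ℝ) (S : Set (EE N)), MeasurableSet S → S ⊆ closedBall 0 1 →
      0 ≤ᵐ[volume.restrict S] fun x => (v (y + R • x) + 1) ^ r := by
    intro r S hS hSs
    filter_upwards [ae_restrict_mem hS] with x hx
    exact Real.rpow_nonneg (hpos x (hSs hx)).le _
  have hIntg : ∀ (r : ℝ) (S : Set (EE N)), S ⊆ closedBall 0 1 →
      IntegrableOn (fun x => (v (y + R • x) + 1) ^ r) S := fun r S hS =>
    ((hcont r).integrableOn_compact (isCompact_closedBall _ _)).mono_set hS
  have hb1 : ball (0 : EE N) (1 / 2 ^ ℓ) ⊆ closedBall 0 1 :=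
    (ball_subset_ball (hle1 _)).trans ball_subset_closedBall
  have hb2 : ball (0 : EE N) (1 / 2 ^ (ℓ + 1)) ⊆ closedBall 0 1 :=
    (ball_subset_ball (hle1 _)).trans ball_subset_closedBall
  have i1 : ∫ x in ball (0 : EE N) (1 / 2 ^ (ℓ + 1)), (v (y + R • x) + 1) ^ s ≤
      ∫ x in B, (v (y + R • x) + 1) ^ s :=
    setIntegral_mono_set (hIntg s B hBs) (hnn s B hBc.measurableSet hBs)
      (by rw [hB]; exact ball_subset_closedBall.eventuallyLE)
  have i2 : ∫ x in B, (v (y + R • x) + 1) ^ s' ≤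
      ∫ x in ball (0 : EE N) (1 / 2 ^ ℓ), (v (y + R • x) + 1) ^ s' :=
    setIntegral_mono_set (hIntg s' _ hb1) (hnn s' _ measurableSet_ball hb1)
      (by rw [hB]; exact (closedBall_subset_ball hlt).eventuallyLE)
  have j := jensen hBc (s' / s) ((one_le_div hs0).2 hss) ((hcont s).mono hBs)
    (fun x hx => Real.rpow_nonneg (hpos x (hBs hx)).le _)
  have e : ∫ x in B, ((v (y + R • x) + 1) ^ s) ^ (s' / s) = ∫ x in B, (v (y + R • x) + 1) ^ s' := by
    apply setIntegral_congr_fun hBc.measurableSet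
    intro x hx
    simp only
    rw [← Real.rpow_mul (hpos x (hBs hx)).le]
    congr 1; field_simp
  rw [e, ← hVe] at j
  have p0 : 0 ≤ ∫ x in ball (0 : EE N) (1 / 2 ^ (ℓ + 1)), (v (y + R • x) + 1) ^ s :=
    integral_nonneg_of_ae (hnn s _ measurableSet_ball hb2)
  have p2 : 0 ≤ ∫ x in B, (v (y + R • x) + 1) ^ s' :=
    integral_nonneg_of_ae (hnn s' _ hBc.measurableSet hBs)
  generalize (∫ x in ball (0 : EE N) (1 / 2 ^ (ℓ + 1)), (v (y + R • x) + 1) ^ s) = W at *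
  generalize (∫ x in B, (v (y + R • x) + 1) ^ s) = X at *
  generalize (∫ x in B, (v (y + R • x) + 1) ^ s') = Y at *
  generalize (∫ x in ball (0 : EE N) (1 / 2 ^ ℓ), (v (y + R • x) + 1) ^ s') = Z at *
  calc W ^ (2 / s) ≤ X ^ (2 / s) := Real.rpow_le_rpow p0 i1 (by positivity)
    _ = (X ^ (s' / s)) ^ (2 / s') := by
        rw [← Real.rpow_mul (p0.trans i1)]; congr 1; field_simp
    _ ≤ (V ^ (s' / s) * Y) ^ (2 / s') :=
        Real.rpow_le_rpow (Real.rpow_nonneg (p0.trans i1) _) j (by positivity)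
    _ = V ^ (2 / s) * Y ^ (2 / s') := by
        rw [Real.mul_rpow (by positivity) p2, ← Real.rpow_mul hV.le]
        congr 2; field_simp
    _ ≤ V ^ (2 / s) * Z ^ (2 / s') := by
        apply mul_le_mul_of_nonneg_left _ (by positivity)
        exact Real.rpow_le_rpow p2 i2 (by positivity)

lemma PP_all {N : ℕ} (hN : 3 ≤ N) {Ω : Set (EE N)} (hΩ : IsOpen Ω) {p θ lam gam s₀ : ℝ}
    (hp : 1 < p) (hpθ : p ≤ θ) (hlam : 0 < lam) (hgam : 0 < gam) (hs₀ : 2 < s₀)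
    (huniq : ∀ s' : ℝ, 2 < s' → Lpoly p θ s' = 0 → s' = s₀) (n : ℕ) :
    ∀ s : ℝ, 2 ≤ s → s < N / ((N : ℝ) - 2) * s₀ → s ≤ 2 * ((N : ℝ) / (N - 2)) ^ n →
      PP Ω lam gam p θ s := by
  have hN' : (3 : ℝ) ≤ N := by exact_mod_cast hN
  have hN2 : (0:ℝ) < N - 2 := by linarith
  have hκ : 0 < (N : ℝ) / (N - 2) := by positivity
  induction n with
  | zero =>
    intro s h1 _ h3
    have : s = 2 := by
      rw [pow_zero, mul_one] at h3
      linarith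
    rw [this]
    exact PP_two _ _ _ _ _
  | succ n ih =>
    intro s h1 h2 h3
    by_cases h : s ≤ N / ((N : ℝ) - 2) * 2
    · exact PP_down h1 h (PP_step hN hΩ hp hpθ le_rfl
        (Lpoly_neg hp hpθ huniq le_rfl hs₀) hlam hgam (PP_two _ _ _ _ _))
    · push Not at h
      obtain ⟨κ, hκe⟩ : ∃ κ, κ = (N : ℝ) / (N - 2) := ⟨_, rfl⟩
      have hκ1 : 1 ≤ κ := by rw [hκe, one_le_div hN2]; linarith
      rw [← hκe] at hκ h h2 h3
      rw [← hκe] at ih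
      obtain ⟨t, rfl⟩ : ∃ t, s = κ * t := ⟨s / κ, by field_simp⟩
      have t1 : 2 < t := lt_of_mul_lt_mul_left h hκ.le
      have t2 : t < s₀ := lt_of_mul_lt_mul_left h2 hκ.le
      have t3 : t ≤ 2 * κ ^ n := by
        apply le_of_mul_le_mul_left _ hκ
        rw [pow_succ] at h3
        linarith
      have := PP_step hN hΩ hp hpθ t1.le (Lpoly_neg hp hpθ huniq t1.le t2) hlam hgam
        (ih t t1.le (t2.trans_le (le_mul_of_one_le_left (by linarith) hκ1)) t3)
      rwa [← hκe] at this

/-- iterated local estimate for stable solutions. -/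
theorem stmt18 {N : ℕ} (hN : 3 ≤ N) (Ω : Set (EuclideanSpace ℝ (Fin N))) (hΩ : IsOpen Ω)
    (p θ lam gam s₀ s : ℝ) (hp : 1 < p) (hpθ : p ≤ θ) (hlam : 0 < lam) (hgam : 0 < gam)
    (hs₀ : 2 < s₀) (hroot : Lpoly p θ s₀ = 0)
    (huniq : ∀ s' : ℝ, 2 < s' → Lpoly p θ s' = 0 → s' = s₀)
    (hs : 2 ≤ s) (hs' : s < N / ((N : ℝ) - 2) * s₀) :
    ∃ (ℓ : ℕ) (C : ℝ), 0 < C ∧ ∀ u v : EuclideanSpace ℝ (Fin N) → ℝ,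
      IsSolution Ω lam gam p θ u v → IsStable Ω lam gam p θ u v →
      ∀ (y : EuclideanSpace ℝ (Fin N)) (R : ℝ), 0 < R → closedBall y R ⊆ Ω →
        (R ^ (-(N : ℝ)) * ∫ x in ball y (R / 2 ^ ℓ), (v x + 1) ^ s) ^ (2 / s)
          ≤ C * R ^ (-(N : ℝ)) * ∫ x in ball y R, (v x + 1) ^ 2 := by
  have hN' : (3 : ℝ) ≤ N := by exact_mod_cast hN
  have hN2 : (0:ℝ) < N - 2 := by linarith
  obtain ⟨n, hn⟩ := pow_unbounded_of_one_lt s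
    (show 1 < (N : ℝ) / (N - 2) by rw [one_lt_div hN2]; linarith)
  have h0 : 0 < ((N : ℝ) / (N - 2)) ^ n := by positivity
  obtain ⟨ℓ, C, hC, h⟩ := PP_all hN hΩ hp hpθ hlam hgam hs₀ huniq n s hs hs' (by linarith)
  refine ⟨ℓ, C, hC, ?_⟩
  intro u v h1 h2 y R hR hb
  have := h u v h1 h2 y R hR hb
  simp only [Real.rpow_two] at this
  rw [mul_assoc]
  exact this
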